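/- The function u defined by u(t, x) = F_p(t, Δ(t, x)) for x > 0 and u(t, x) = −F_p(t, Δ(t, −x)) for x < 0 (extended arbitrarily, e.g. by 0, at x = 0) is a Kruzhkov entropy solution of ∂_t u + ∂_x(u²/2 + g(x)) = 0 with initial datum u₀: that is, u is bounded, and for every nonnegative test function φ ∈ C_c^∞([0, +∞) × ℝ) and every k ∈ ℝ, ∫₀^∞ ∫_ℝ [ |u(t,x) − k| ∂_t φ(t,x) + sgn(u(t,x) − k)((u(t,x)²/2) − (k²/2)) ∂_x φ(t,x) − sgn(u(t,x) − k) g′(x) φ(t,x) ] dx dt + ∫_ℝ |u₀(x) − k| φ(0,x) dx ≥ 0. -/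

import Mathlib

open Real Set Filter MeasureTheory
open scoped Topology

/-- The potential `g` from the Hamiltonian `H(x,p) = p²/2 + g(x)`. -/
noncomputable def g (x : ℝ) : ℝ := if |x| ≤ 1 then 1 - (1 - x ^ 2) ^ 4 else 1

/-- The derivative of `g`. -/
noncomputable def g' (x : ℝ) : ℝ := if |x| ≤ 1 then 8 * x * (1 - x ^ 2) ^ 3 else 0

/-- `(q, p)` is a (global) solution of the Hamiltonian system (HS): `q̇ = p`, `ṗ = -g'(q)`. -/
def IsHSSol (q p : ℝ → ℝ) : Prop :=
  (∀ t : ℝ, HasDerivAt q (p t) t) ∧ (∀ t : ℝ, HasDerivAt p (-(g' (q t))) t)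

/-- `F` is the flow of (HS): `F t q₀ p₀ = (q t, p t)` for the solution with data `(q₀, p₀)`. -/
def IsHSFlow (F : ℝ → ℝ → ℝ → ℝ × ℝ) : Prop :=
  ∀ q₀ p₀ : ℝ,
    IsHSSol (fun t => (F t q₀ p₀).1) (fun t => (F t q₀ p₀).2) ∧ F 0 q₀ p₀ = (q₀, p₀)

/-- The set `([0,∞) × {2}) ∪ ({0} × (0,2])`, codomain of the map `Δ`. -/
def Dset : Set (ℝ × ℝ) := (Ici (0:ℝ) ×ˢ ({2} : Set ℝ)) ∪ ({(0:ℝ)} ×ˢ Ioc (0:ℝ) 2)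

/-- `T` is the smallest positive period of `q`. -/
def IsSmallestPeriod (q : ℝ → ℝ) (T : ℝ) : Prop :=
  0 < T ∧ Function.Periodic q T ∧ ∀ T' : ℝ, 0 < T' → Function.Periodic q T' → T ≤ T'

/-- `T` is the period map `𝒯`, assigning to `p₀ ∈ (0, √2)` the smallest positive period of
the `q`-component of the solution of (HS) with initial datum `(0, p₀)`. -/
def IsPeriodMap (F : ℝ → ℝ → ℝ → ℝ × ℝ) (T : ℝ → ℝ) : Prop :=
  ∀ p₀ ∈ Ioo (0:ℝ) (Real.sqrt 2), IsSmallestPeriod (fun t => (F t 0 p₀).1) (T p₀)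

/-- `Δ` associates to `(t,x)` the datum in `Dset` whose orbit stays positive on `(0,t)`
and reaches `x` at time `t`. -/
def IsDeltaMap (F : ℝ → ℝ → ℝ → ℝ × ℝ) (Δ : ℝ → ℝ → ℝ × ℝ) : Prop :=
  ∀ t x : ℝ, 0 < t → 0 < x →
    Δ t x ∈ Dset ∧ (F t (Δ t x).1 (Δ t x).2).1 = x ∧
      ∀ s ∈ Ioo (0:ℝ) t, 0 < (F s (Δ t x).1 (Δ t x).2).1

/-- The solution `u` of the conservation law built from the flow `F` and the map `Δ`
(extended by `0` at `x = 0`). -/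
noncomputable def usol (F : ℝ → ℝ → ℝ → ℝ × ℝ) (Δ : ℝ → ℝ → ℝ × ℝ) (t x : ℝ) : ℝ :=
  if 0 < x then (F t (Δ t x).1 (Δ t x).2).2
  else if x < 0 then -(F t (Δ t (-x)).1 (Δ t (-x)).2).2
  else 0

/-- The initial datum `u₀`: `-2` for `x < 0` and `2` for `x > 0`. -/
noncomputable def u₀ (x : ℝ) : ℝ := if x < 0 then -2 else 2

/-!
Label the orbits of (HS) that start in `Dset` and have stayed in `q > 0` by `q(0) + p(0)`. They
never cross: orbits leaving the axis are compared through their Wronskian, which is monotone because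
`g'(x) / x` decreases on `x > 0`, and orbits with `p(0) = 2` through their energy. The same
comparisons bound the difference of two momenta by the distance of the positions. Hence `u` is
locally Lipschitz on `t, x > 0` and solves the equation almost everywhere, because it equals the
momentum along each orbit.

Rademacher's theorem and integration by parts on `(ε, ∞)²` therefore turn the Kruzhkov integral
into boundary terms, and the left half-plane reduces to the right one with level `-k`, since `u` and
`g'` are odd. Letting `ε → 0`, the line `t = ε` produces the initial datum. On the two sides of
`x = 0` the fluxes of levels `k` and `-k` sum to at most `(u⁺)²`, which tends to `0`: momenta
decrease along orbits, so `u(t, x) ≤ x / t`.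
-/

section Calculus

lemma le_of_forall_hasDerivAt_nonneg {f f' : ℝ → ℝ} {a b : ℝ} (hf : ∀ x, HasDerivAt f (f' x) x)
    (h : ∀ x ∈ Ioo a b, 0 ≤ f' x) (hab : a ≤ b) : f a ≤ f b := by
  have hmono : MonotoneOn f (Icc a b) := by
    refine monotoneOn_of_hasDerivWithinAt_nonneg (convex_Icc a b) (f' := f')
      (fun x _ => (hf x).continuousAt.continuousWithinAt)
      (fun x _ => (hf x).hasDerivWithinAt) fun x hx => h x ?_
    rwa [interior_Icc] at hx
  exact hmono (left_mem_Icc.2 hab) (right_mem_Icc.2 hab) hab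

lemma abs_sub_le_of_forall_hasDerivAt {f f' : ℝ → ℝ} {C : ℝ} (hf : ∀ x, HasDerivAt f (f' x) x)
    (hC : ∀ x, |f' x| ≤ C) (x y : ℝ) : |f x - f y| ≤ C * |x - y| :=
  Convex.norm_image_sub_le_of_norm_hasDerivWithin_le (s := univ)
    (fun z _ => (hf z).hasDerivWithinAt) (fun z _ => hC z) convex_univ (mem_univ y) (mem_univ x)

lemma pos_of_forall_first_zero_ne {d : ℝ → ℝ} {a t : ℝ} (hd : Continuous d)
    (hstart : ∀ᶠ s in 𝓝[>] a, 0 < d s)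
    (hne : ∀ s ∈ Ioc a t, (∀ r ∈ Ioo a s, 0 < d r) → d s ≠ 0) :
    ∀ s ∈ Ioc a t, 0 < d s := by
  by_contra! ⟨s, ⟨has, hst⟩, hds⟩
  obtain ⟨η, hη, hpos⟩ := mem_nhdsGT_iff_exists_Ioo_subset.1 hstart
  have hηs : η ≤ s := not_lt.1 fun hlt => hds.not_gt (hpos ⟨has, hlt⟩)
  have hcompact : IsCompact (Icc η s ∩ {r | d r ≤ 0}) :=
    isCompact_Icc.inter_right (isClosed_le hd continuous_const)
  obtain ⟨r, ⟨⟨hηr, hrs⟩, hdr⟩, hleast⟩ := hcompact.exists_isLeast ⟨s, ⟨hηs, le_rfl⟩, hds⟩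
  have har : a < r := hη.trans_le hηr
  have hbefore : ∀ r' ∈ Ioo a r, 0 < d r' := fun r' hr' => by
    by_contra! hle
    rcases lt_or_ge r' η with hlt | hge
    · exact hle.not_gt (hpos ⟨hr'.1, hlt⟩)
    · exact hr'.2.not_ge (hleast ⟨⟨hge, hr'.2.le.trans hrs⟩, hle⟩)
  have hge : 0 ≤ d r :=
    ge_of_tendsto (hd.continuousAt.tendsto.mono_left nhdsWithin_le_nhds)
      (by filter_upwards [Ioo_mem_nhdsLT har] with x hx using (hbefore x hx).le)
  exact hne r ⟨har, hrs.trans hst⟩ hbefore (le_antisymm hdr hge)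

lemma hasDerivAt_nonpos_of_first_zero {d : ℝ → ℝ} {a s d' : ℝ} (hd : HasDerivAt d d' s)
    (has : a < s) (hpos : ∀ r ∈ Ioo a s, 0 < d r) (hzero : d s = 0) : d' ≤ 0 := by
  have hslope : Tendsto (slope d s) (𝓝[<] s) (𝓝 d') :=
    (hasDerivAt_iff_tendsto_slope.1 hd).mono_left (nhdsWithin_mono _ fun _ hx => ne_of_lt hx)
  refine le_of_tendsto hslope ?_
  filter_upwards [Ioo_mem_nhdsLT has] with x hx
  rw [slope_def_field, hzero]
  exact div_nonpos_of_nonneg_of_nonpos (by linarith [hpos x hx]) (by linarith [hx.2])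

lemma eventually_pos_nhdsGT_of_hasDerivAt_pos {d : ℝ → ℝ} {a d' : ℝ} (hd : HasDerivAt d d' a)
    (hzero : d a = 0) (hpos : 0 < d') : ∀ᶠ s in 𝓝[>] a, 0 < d s := by
  have hslope : Tendsto (slope d a) (𝓝[>] a) (𝓝 d') :=
    (hasDerivAt_iff_tendsto_slope.1 hd).mono_left (nhdsWithin_mono _ fun _ hx => ne_of_gt hx)
  filter_upwards [hslope.eventually (lt_mem_nhds hpos), self_mem_nhdsWithin] with s hs has
  rw [slope_def_field, hzero, sub_zero] at hs
  exact (div_pos_iff_of_pos_right (sub_pos.2 has)).1 hs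

lemma pos_of_neg_mul_le_hasDerivAt {d d' : ℝ → ℝ} {K a t : ℝ} (hd : ∀ s, HasDerivAt d (d' s) s)
    (hstart : 0 < d a) (hd' : ∀ s, 0 < d s → -(K * d s) ≤ d' s) :
    ∀ s ∈ Ioc a t, 0 < d s := by
  have hcont : Continuous d := continuous_iff_continuousAt.2 fun s => (hd s).continuousAt
  refine pos_of_forall_first_zero_ne hcont
    ((hcont.continuousAt.eventually (lt_mem_nhds hstart)).filter_mono nhdsWithin_le_nhds) ?_
  intro s hs hpos hzero
  have hexp : ∀ r, HasDerivAt (fun r => d r * exp (K * r)) ((d' r + K * d r) * exp (K * r)) r := by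
    intro r
    refine ((hd r).mul ((hasDerivAt_id r).const_mul K).exp).congr_deriv ?_
    simp only [id_eq]; ring
  have hle := le_of_forall_hasDerivAt_nonneg hexp
    (fun r hr => mul_nonneg (by linarith [hd' r (hpos r hr)]) (exp_pos _).le) hs.1.le
  simp only [hzero, zero_mul] at hle
  exact hle.not_gt (mul_pos hstart (exp_pos _))

end Calculus

section Potential

lemma hasDerivAt_max_zero_pow (n : ℕ) (y : ℝ) :
    HasDerivAt (fun y : ℝ => max 0 y ^ (n + 2)) ((n + 2 : ℝ) * max 0 y ^ (n + 1)) y := by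
  have hne : ∀ y : ℝ, y ≠ 0 →
      HasDerivAt (fun y : ℝ => max 0 y ^ (n + 2)) ((n + 2 : ℝ) * max 0 y ^ (n + 1)) y := by
    intro y hy
    rcases lt_or_gt_of_ne hy with hneg | hpos
    · have heq : (fun y : ℝ => max 0 y ^ (n + 2)) =ᶠ[𝓝 y] fun _ => 0 := by
        filter_upwards [Iio_mem_nhds hneg] with z hz
        simp [max_eq_left (mem_Iio.1 hz).le]
      simpa [max_eq_left hneg.le] using (hasDerivAt_const y (0 : ℝ)).congr_of_eventuallyEq heq
    · have heq : (fun y : ℝ => max 0 y ^ (n + 2)) =ᶠ[𝓝 y] fun y => y ^ (n + 2) := by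
        filter_upwards [Ioi_mem_nhds hpos] with z hz
        simp [max_eq_right (mem_Ioi.1 hz).le]
      simpa [max_eq_right hpos.le] using (hasDerivAt_pow (n + 2) y).congr_of_eventuallyEq heq
  rcases eq_or_ne y 0 with rfl | hy
  · exact hasDerivAt_of_hasDerivAt_of_ne (fun z hz => hne z hz) (by fun_prop) (by fun_prop)
  · exact hne y hy

lemma one_sub_sq_nonneg_iff {x : ℝ} : 0 ≤ 1 - x ^ 2 ↔ |x| ≤ 1 := by
  rw [sub_nonneg, sq_le_one_iff_abs_le_one]

lemma g_eq (x : ℝ) : g x = 1 - max 0 (1 - x ^ 2) ^ 4 := by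
  unfold g
  split_ifs with h
  · rw [max_eq_right (one_sub_sq_nonneg_iff.2 h)]
  · rw [max_eq_left (not_le.1 (mt one_sub_sq_nonneg_iff.1 h)).le]; norm_num

lemma g'_eq (x : ℝ) : g' x = 8 * x * max 0 (1 - x ^ 2) ^ 3 := by
  unfold g'
  split_ifs with h
  · rw [max_eq_right (one_sub_sq_nonneg_iff.2 h)]
  · rw [max_eq_left (not_le.1 (mt one_sub_sq_nonneg_iff.1 h)).le]; norm_num

lemma max_zero_one_sub_sq_le_one (x : ℝ) : max 0 (1 - x ^ 2) ≤ 1 :=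
  max_le zero_le_one (by linarith [sq_nonneg x])

lemma hasDerivAt_one_sub_sq (x : ℝ) : HasDerivAt (fun x : ℝ => 1 - x ^ 2) (-(2 * x)) x := by
  simpa using (hasDerivAt_pow 2 x).const_sub 1

lemma hasDerivAt_g (x : ℝ) : HasDerivAt g (g' x) x := by
  rw [funext g_eq]
  refine (((hasDerivAt_max_zero_pow 2 (1 - x ^ 2)).comp x
    (hasDerivAt_one_sub_sq x)).const_sub 1).congr_deriv ?_
  rw [g'_eq]; push_cast; ring

lemma hasDerivAt_g' (x : ℝ) : HasDerivAt g'
    (8 * max 0 (1 - x ^ 2) ^ 3 - 48 * x ^ 2 * max 0 (1 - x ^ 2) ^ 2) x := by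
  rw [funext g'_eq]
  refine (((hasDerivAt_id x).const_mul 8).mul ((hasDerivAt_max_zero_pow 1 (1 - x ^ 2)).comp x
    (hasDerivAt_one_sub_sq x))).congr_deriv ?_
  simp only [Function.comp_apply, id_eq]; push_cast; ring

lemma g_mem_Icc (x : ℝ) : g x ∈ Icc (0 : ℝ) 1 := by
  rw [g_eq]
  have hle := pow_le_one₀ (n := 4) (le_max_left 0 (1 - x ^ 2)) (max_zero_one_sub_sq_le_one x)
  have hge := pow_nonneg (le_max_left 0 (1 - x ^ 2)) 4
  constructor <;> linarith

lemma g'_nonneg {x : ℝ} (hx : 0 ≤ x) : 0 ≤ g' x := by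
  rw [g'_eq]; have := le_max_left 0 (1 - x ^ 2); positivity

lemma g'_odd : Function.Odd g' := fun x => by simp [g'_eq]

lemma abs_g'_le (x : ℝ) : |g' x| ≤ 8 := by
  unfold g'
  split_ifs with h
  · have hnonneg := one_sub_sq_nonneg_iff.2 h
    have hle : (1 - x ^ 2) ^ 3 ≤ 1 := pow_le_one₀ hnonneg (by linarith [sq_nonneg x])
    rw [abs_mul, abs_mul, abs_of_nonneg (pow_nonneg hnonneg 3), abs_of_pos (by norm_num)]
    nlinarith [abs_nonneg x, pow_nonneg hnonneg 3]
  · norm_num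

lemma g_monotoneOn : MonotoneOn g (Ici 0) := fun _ hx _ _ hxy =>
  le_of_forall_hasDerivAt_nonneg hasDerivAt_g (fun _ hz => g'_nonneg (le_trans hx hz.1.le)) hxy

lemma g_sub_le {x y : ℝ} (hxy : x ≤ y) : g y - g x ≤ 8 * (y - x) := by
  have hlip := abs_sub_le_of_forall_hasDerivAt hasDerivAt_g abs_g'_le y x
  rw [abs_of_nonneg (sub_nonneg.2 hxy)] at hlip
  exact (le_abs_self _).trans hlip

lemma lipschitzWith_g' : LipschitzWith 16 g' := by
  refine LipschitzWith.of_dist_le_mul fun x y =>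
    abs_sub_le_of_forall_hasDerivAt hasDerivAt_g' (fun z => ?_) x y
  rcases le_total (1 - z ^ 2) 0 with hm | hm
  · norm_num [max_eq_left hm]
  · have hz : z ^ 2 ≤ 1 := by linarith
    rw [max_eq_right hm, abs_le]
    norm_num
    constructor <;> nlinarith [hz, sq_nonneg z, mul_nonneg (sq_nonneg z) hm,
      mul_nonneg (sq_nonneg z) (mul_nonneg hm hm), mul_nonneg hm hm, pow_nonneg hm 3]

lemma continuous_g' : Continuous g' := lipschitzWith_g'.continuous

lemma g'_mul_le_g'_mul {x y : ℝ} (hx : 0 ≤ x) (hxy : x ≤ y) : g' y * x ≤ g' x * y := by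
  have hmax : max 0 (1 - y ^ 2) ≤ max 0 (1 - x ^ 2) := max_le_max le_rfl (by nlinarith)
  have hpow := pow_le_pow_left₀ (le_max_left 0 _) hmax 3
  rw [g'_eq, g'_eq]
  nlinarith [mul_le_mul_of_nonneg_left hpow (mul_nonneg hx (hx.trans hxy))]

end Potential

/-- A global trajectory of Newton's equation `q̈ = -f(q)`, with `p` the momentum `q̇`; the system
(HS) is the case `f = g'`. -/
structure IsNewtonOrbit (f q p : ℝ → ℝ) : Prop where
  hasDerivAt_position (t : ℝ) : HasDerivAt q (p t) t
  hasDerivAt_momentum (t : ℝ) : HasDerivAt p (-f (q t)) t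

lemma IsHSSol.isNewtonOrbit {q p : ℝ → ℝ} (h : IsHSSol q p) : IsNewtonOrbit g' q p := ⟨h.1, h.2⟩

namespace IsNewtonOrbit

variable {f V q p q₁ p₁ q₂ p₂ : ℝ → ℝ} {s t : ℝ}

lemma continuous_position (h : IsNewtonOrbit f q p) : Continuous q :=
  continuous_iff_continuousAt.2 fun t => (h.hasDerivAt_position t).continuousAt

lemma continuous_momentum (h : IsNewtonOrbit f q p) : Continuous p :=
  continuous_iff_continuousAt.2 fun t => (h.hasDerivAt_momentum t).continuousAt

lemma energy_eq (h : IsNewtonOrbit f q p) (hV : ∀ x, HasDerivAt V (f x) x) (s t : ℝ) :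
    p s ^ 2 / 2 + V (q s) = p t ^ 2 / 2 + V (q t) := by
  have henergy : ∀ r, HasDerivAt (fun r => p r ^ 2 / 2 + V (q r)) 0 r := fun r => by
    refine ((((h.hasDerivAt_momentum r).pow 2).div_const 2).add
      ((hV (q r)).comp r (h.hasDerivAt_position r))).congr_deriv ?_
    push_cast; ring
  exact is_const_of_deriv_eq_zero (fun r => (henergy r).differentiableAt)
    (fun r => (henergy r).deriv) s t

lemma eq_of_eq_at {K : NNReal} (hf : LipschitzWith K f) (h₁ : IsNewtonOrbit f q₁ p₁)
    (h₂ : IsNewtonOrbit f q₂ p₂) (hq : q₁ t = q₂ t) (hp : p₁ t = p₂ t) : q₁ = q₂ ∧ p₁ = p₂ := by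
  have hfield : LipschitzWith (max 1 (K * 1)) fun z : ℝ × ℝ => (z.2, -f z.1) :=
    LipschitzWith.prod_snd.prodMk (hf.comp LipschitzWith.prod_fst).neg
  have heq : (fun s => (q₁ s, p₁ s)) = fun s => (q₂ s, p₂ s) :=
    ODE_solution_unique_univ (v := fun _ z => (z.2, -f z.1)) (s := fun _ => univ)
      (fun _ => hfield.lipschitzOnWith)
      (fun s => ⟨(h₁.hasDerivAt_position s).prodMk (h₁.hasDerivAt_momentum s), mem_univ _⟩)
      (fun s => ⟨(h₂.hasDerivAt_position s).prodMk (h₂.hasDerivAt_momentum s), mem_univ _⟩)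
      (t₀ := t) (by simp only [hq, hp])
  exact ⟨funext fun s => congrArg Prod.fst (congrFun heq s),
    funext fun s => congrArg Prod.snd (congrFun heq s)⟩

lemma wronskian_nonneg (hf : ∀ x y, 0 ≤ x → x ≤ y → f y * x ≤ f x * y)
    (h₁ : IsNewtonOrbit f q₁ p₁) (h₂ : IsNewtonOrbit f q₂ p₂) (ht : 0 ≤ t) (hq₁ : q₁ 0 = 0)
    (hq₂ : q₂ 0 = 0) (hnonneg : ∀ s ∈ Ioo 0 t, 0 ≤ q₁ s) (hle : ∀ s ∈ Ioo 0 t, q₁ s ≤ q₂ s) :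
    0 ≤ p₂ t * q₁ t - p₁ t * q₂ t := by
  have hderiv : ∀ s, HasDerivAt (fun s => p₂ s * q₁ s - p₁ s * q₂ s)
      (f (q₁ s) * q₂ s - f (q₂ s) * q₁ s) s := fun s => by
    refine (((h₂.hasDerivAt_momentum s).mul (h₁.hasDerivAt_position s)).sub
      ((h₁.hasDerivAt_momentum s).mul (h₂.hasDerivAt_position s))).congr_deriv ?_
    ring
  have hmono := le_of_forall_hasDerivAt_nonneg hderiv
    (fun s hs => sub_nonneg.2 (hf _ _ (hnonneg s hs) (hle s hs))) ht
  simpa [hq₁, hq₂] using hmono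

-- Sturm comparison of `q₂ - q₁` with `sinh (L * ·)`, the solution of `ÿ = L² y` vanishing at `0`.
lemma momentum_sub_le {L : ℝ} (hL : 0 < L) (hf : ∀ x y, x ≤ y → -(L ^ 2 * (y - x)) ≤ f y - f x)
    (h₁ : IsNewtonOrbit f q₁ p₁) (h₂ : IsNewtonOrbit f q₂ p₂) (ht : 0 < t)
    (hle : ∀ s ∈ Icc 0 t, q₁ s ≤ q₂ s) : p₂ t - p₁ t ≤ (L + 1 / t) * (q₂ t - q₁ t) := by
  have hderiv : ∀ s, HasDerivAt
      (fun s => (q₂ s - q₁ s) * (L * cosh (L * s)) - (p₂ s - p₁ s) * sinh (L * s))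
      (sinh (L * s) * (L ^ 2 * (q₂ s - q₁ s) + (f (q₂ s) - f (q₁ s)))) s := fun s => by
    have hlin : HasDerivAt (fun s => L * s) L s := by simpa using (hasDerivAt_id s).const_mul L
    refine ((((h₂.hasDerivAt_position s).sub (h₁.hasDerivAt_position s)).mul
      (hlin.cosh.const_mul L)).sub (((h₂.hasDerivAt_momentum s).sub
      (h₁.hasDerivAt_momentum s)).mul hlin.sinh)).congr_deriv ?_
    simp only [Pi.sub_apply]; ring
  have hmono := le_of_forall_hasDerivAt_nonneg hderiv (fun s hs => mul_nonneg
    (sinh_nonneg_iff.2 (mul_pos hL hs.1).le)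
    (by linarith [hf _ _ (hle s ⟨hs.1.le, hs.2.le⟩)])) ht.le
  have hdist₀ : 0 ≤ q₂ 0 - q₁ 0 := sub_nonneg.2 (hle 0 ⟨le_rfl, ht.le⟩)
  have hdist : 0 ≤ q₂ t - q₁ t := sub_nonneg.2 (hle t ⟨ht.le, le_rfl⟩)
  have hsinh : L * t ≤ sinh (L * t) := self_le_sinh_iff.2 (by positivity)
  have hcosh : cosh (L * t) ≤ sinh (L * t) + 1 := by
    have := cosh_sub_sinh (L * t)
    have : exp (-(L * t)) ≤ 1 := exp_le_one_iff.2 (by nlinarith)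
    linarith
  have hcosh' : L * cosh (L * t) ≤ (L + 1 / t) * sinh (L * t) := by
    have : L ≤ 1 / t * sinh (L * t) := by
      rw [one_div_mul_eq_div, le_div_iff₀ ht]; exact hsinh
    nlinarith
  simp only [mul_zero, cosh_zero, sinh_zero, mul_one, sub_zero] at hmono
  refine le_of_mul_le_mul_right ?_ ((mul_pos hL ht).trans_le hsinh)
  nlinarith [mul_le_mul_of_nonneg_left hcosh' hdist]

lemma mul_momentum_sub_le {L m : ℝ} (hV : ∀ x, HasDerivAt V (f x) x)
    (hlip : ∀ x y, x ≤ y → V y - V x ≤ L * (y - x)) (hL : 0 ≤ L)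
    (h₁ : IsNewtonOrbit f q₁ p₁) (h₂ : IsNewtonOrbit f q₂ p₂)
    (henergy : p₁ 0 ^ 2 / 2 + V (q₁ 0) ≤ p₂ 0 ^ 2 / 2 + V (q₂ 0)) (hm : 0 ≤ m) (hp : m ≤ p₂ s)
    (hq : q₁ s ≤ q₂ s) : m * (p₁ s - p₂ s) ≤ L * (q₂ s - q₁ s) := by
  have hgap := hlip _ _ hq
  have henergy_s : p₁ s ^ 2 / 2 + V (q₁ s) ≤ p₂ s ^ 2 / 2 + V (q₂ s) := by
    rwa [h₁.energy_eq hV s 0, h₂.energy_eq hV s 0]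
  rcases le_total (p₁ s) (p₂ s) with hle | hle
  · nlinarith [mul_nonneg hL (sub_nonneg.2 hq)]
  · nlinarith

lemma mul_momentum_le (h : IsNewtonOrbit f q p) (ht : 0 ≤ t) (hf : ∀ s ∈ Ioc 0 t, 0 ≤ f (q s)) :
    p t * t ≤ q t - q 0 := by
  have hanti : ∀ s ∈ Ioo 0 t, p t ≤ p s := fun s hs => by
    refine neg_le_neg_iff.1 (le_of_forall_hasDerivAt_nonneg (f := fun r => -p r)
      (fun r => (h.hasDerivAt_momentum r).neg) (fun r hr => ?_) hs.2.le)
    simpa using hf r ⟨hs.1.trans hr.1, hr.2.le⟩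
  have hderiv : ∀ s, HasDerivAt (fun s => q s - p t * s) (p s - p t) s := fun s =>
    ((h.hasDerivAt_position s).sub ((hasDerivAt_id s).const_mul (p t))).congr_deriv (by simp)
  have hmono := le_of_forall_hasDerivAt_nonneg hderiv (fun s hs => sub_nonneg.2 (hanti s hs)) ht
  simp only [mul_zero, sub_zero] at hmono
  linarith

end IsNewtonOrbit

section Admissible

lemma mem_Dset_iff {a : ℝ × ℝ} : a ∈ Dset ↔ 0 ≤ a.1 ∧ a.2 = 2 ∨ a.1 = 0 ∧ 0 < a.2 ∧ a.2 ≤ 2 := by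
  simp [Dset]

lemma fst_nonneg_of_mem_Dset {a : ℝ × ℝ} (ha : a ∈ Dset) : 0 ≤ a.1 := by
  rcases mem_Dset_iff.1 ha with h | h <;> linarith [h.1]

lemma snd_mem_Ioc_of_mem_Dset {a : ℝ × ℝ} (ha : a ∈ Dset) : a.2 ∈ Ioc (0 : ℝ) 2 := by
  rcases mem_Dset_iff.1 ha with h | h
  · norm_num [h.2]
  · exact h.2

lemma eq_of_add_eq_of_mem_Dset {a b : ℝ × ℝ} (ha : a ∈ Dset) (hb : b ∈ Dset)
    (h : a.1 + a.2 = b.1 + b.2) : a = b := by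
  rcases mem_Dset_iff.1 ha with ha | ha <;> rcases mem_Dset_iff.1 hb with hb | hb <;>
    exact Prod.ext (by linarith) (by linarith)

lemma lt_cases_of_add_lt_of_mem_Dset {a b : ℝ × ℝ} (ha : a ∈ Dset) (hb : b ∈ Dset)
    (h : a.1 + a.2 < b.1 + b.2) : a.1 = 0 ∧ b.1 = 0 ∧ a.2 < b.2 ∨ a.1 < b.1 ∧ b.2 = 2 := by
  rcases mem_Dset_iff.1 ha with ha | ha <;> rcases mem_Dset_iff.1 hb with hb | hb
  · exact .inr ⟨by linarith, hb.2⟩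
  · linarith
  · rcases hb.1.eq_or_lt with hb₀ | hb₀
    · exact .inl ⟨ha.1, hb₀.symm, by linarith⟩
    · exact .inr ⟨by linarith, hb.2⟩
  · exact .inl ⟨ha.1, hb.1, by linarith⟩

lemma one_le_momentum_of_start_eq_two {q p : ℝ → ℝ} (h : IsNewtonOrbit g' q p) (hp : p 0 = 2)
    (s : ℝ) : 1 ≤ p s := by
  have hsq : ∀ r, 2 ≤ p r ^ 2 := fun r => by
    have henergy := h.energy_eq hasDerivAt_g r 0
    rw [hp] at henergy
    linarith [(g_mem_Icc (q 0)).1, (g_mem_Icc (q r)).2]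
  by_contra! hlt
  have hmem : (1 : ℝ) ∈ uIcc (p s) (p 0) := by
    rw [hp, uIcc_of_le (by linarith)]; exact ⟨hlt.le, by norm_num⟩
  obtain ⟨r, -, hr⟩ := intermediate_value_uIcc h.continuous_momentum.continuousOn hmem
  have := hsq r
  norm_num [hr] at this

/-- The orbits of (HS) that `Δ` selects: they start in `Dset` and stay in `q > 0` on `(0, t]`. They
are labelled by `q 0 + p 0`, which determines the datum in `Dset`. -/
structure IsAdmissible (q p : ℝ → ℝ) (t : ℝ) : Prop where
  isNewtonOrbit : IsNewtonOrbit g' q p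
  start_mem : (q 0, p 0) ∈ Dset
  pos : ∀ s ∈ Ioc 0 t, 0 < q s

namespace IsAdmissible

variable {q p q₁ p₁ q₂ p₂ : ℝ → ℝ} {s t ε : ℝ}

lemma mono (h : IsAdmissible q p t) (hst : s ≤ t) : IsAdmissible q p s :=
  ⟨h.isNewtonOrbit, h.start_mem, fun r hr => h.pos r ⟨hr.1, hr.2.trans hst⟩⟩

lemma abs_momentum_le (h : IsAdmissible q p t) (s : ℝ) : |p s| ≤ 3 := by
  have henergy := h.isNewtonOrbit.energy_eq hasDerivAt_g s 0
  have hp := snd_mem_Ioc_of_mem_Dset h.start_mem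
  refine abs_le_of_sq_le_sq ?_ (by norm_num)
  nlinarith [(g_mem_Icc (q s)).1, (g_mem_Icc (q 0)).2, hp.1, hp.2]

lemma momentum_sub_le_of_start_lt (h₁ : IsAdmissible q₁ p₁ t) (h₂ : IsAdmissible q₂ p₂ t)
    (hq : q₁ 0 < q₂ 0) (hp : p₂ 0 = 2) (hle : q₁ s ≤ q₂ s) :
    p₁ s - p₂ s ≤ 8 * (q₂ s - q₁ s) := by
  have hp₁ := snd_mem_Ioc_of_mem_Dset h₁.start_mem
  have henergy : p₁ 0 ^ 2 / 2 + g (q₁ 0) ≤ p₂ 0 ^ 2 / 2 + g (q₂ 0) := by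
    have hg := g_monotoneOn (fst_nonneg_of_mem_Dset h₁.start_mem)
      (fst_nonneg_of_mem_Dset h₂.start_mem) hq.le
    rw [hp]
    nlinarith [hp₁.1, hp₁.2]
  simpa using h₁.isNewtonOrbit.mul_momentum_sub_le hasDerivAt_g (fun _ _ => g_sub_le)
    (by norm_num) h₂.isNewtonOrbit henergy zero_le_one
    (one_le_momentum_of_start_eq_two h₂.isNewtonOrbit hp s) hle

lemma position_lt_of_start_lt (h₁ : IsAdmissible q₁ p₁ t) (h₂ : IsAdmissible q₂ p₂ t)
    (hq : q₁ 0 < q₂ 0) (hp : p₂ 0 = 2) : ∀ s ∈ Ioc 0 t, q₁ s < q₂ s := by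
  have hpos := pos_of_neg_mul_le_hasDerivAt (t := t) (K := 8)
    (fun s => (h₂.isNewtonOrbit.hasDerivAt_position s).sub (h₁.isNewtonOrbit.hasDerivAt_position s))
    (sub_pos.2 hq) fun s hs => by
      have := momentum_sub_le_of_start_lt h₁ h₂ hq hp (sub_pos.1 hs).le
      simp only [Pi.sub_apply]; linarith
  exact fun s hs => sub_pos.1 (hpos s hs)

-- At a first meeting point the Wronskian forces equal momenta, so the two orbits would coincide.
lemma position_lt_of_start_eq_zero (h₁ : IsAdmissible q₁ p₁ t) (h₂ : IsAdmissible q₂ p₂ t)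
    (hq₁ : q₁ 0 = 0) (hq₂ : q₂ 0 = 0) (hp : p₁ 0 < p₂ 0) : ∀ s ∈ Ioc 0 t, q₁ s < q₂ s := by
  have hderiv : ∀ s, HasDerivAt (fun s => q₂ s - q₁ s) (p₂ s - p₁ s) s := fun s =>
    (h₂.isNewtonOrbit.hasDerivAt_position s).sub (h₁.isNewtonOrbit.hasDerivAt_position s)
  have hpos := pos_of_forall_first_zero_ne (t := t)
    (h₂.isNewtonOrbit.continuous_position.sub h₁.isNewtonOrbit.continuous_position)
    (eventually_pos_nhdsGT_of_hasDerivAt_pos (hderiv 0) (by simp [hq₁, hq₂]) (sub_pos.2 hp)) ?_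
  · exact fun s hs => sub_pos.1 (hpos s hs)
  intro s hs hbefore hmeet
  have hqs : q₁ s = q₂ s := (sub_eq_zero.1 hmeet).symm
  have hwronskian := h₁.isNewtonOrbit.wronskian_nonneg (fun _ _ => g'_mul_le_g'_mul)
    h₂.isNewtonOrbit hs.1.le hq₁ hq₂ (fun r hr => (h₁.pos r ⟨hr.1, hr.2.le.trans hs.2⟩).le)
    (fun r hr => (sub_pos.1 (hbefore r hr)).le)
  have hps : p₁ s = p₂ s := by
    have hle := hasDerivAt_nonpos_of_first_zero (hderiv s) hs.1 hbefore hmeet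
    rw [← hqs, ← sub_mul] at hwronskian
    have hge := nonneg_of_mul_nonneg_left hwronskian (h₁.pos s hs)
    linarith
  have hsame := h₁.isNewtonOrbit.eq_of_eq_at lipschitzWith_g' h₂.isNewtonOrbit hqs hps
  exact hp.ne (congrFun hsame.2 0)

lemma momentum_sub_le_of_start_eq_zero (h₁ : IsAdmissible q₁ p₁ t) (h₂ : IsAdmissible q₂ p₂ t)
    (hq₁ : q₁ 0 = 0) (hq₂ : q₂ 0 = 0) (ht : 0 < t) (hle : ∀ s ∈ Icc 0 t, q₁ s ≤ q₂ s) :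
    p₁ t - p₂ t ≤ 3 / q₁ t * (q₂ t - q₁ t) := by
  have hwronskian := h₁.isNewtonOrbit.wronskian_nonneg (fun _ _ => g'_mul_le_g'_mul)
    h₂.isNewtonOrbit ht.le hq₁ hq₂ (fun r hr => (h₁.pos r ⟨hr.1, hr.2.le⟩).le)
    (fun r hr => hle r ⟨hr.1.le, hr.2.le⟩)
  have hp := neg_le_of_abs_le (h₁.abs_momentum_le t)
  rw [div_mul_eq_mul_div, le_div_iff₀ (h₁.pos t ⟨ht, le_rfl⟩)]
  nlinarith [hle t ⟨ht.le, le_rfl⟩]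

lemma position_le_and_momentum_sub_le (h₁ : IsAdmissible q₁ p₁ t) (h₂ : IsAdmissible q₂ p₂ t)
    (ht : 0 < t) (hlabel : q₁ 0 + p₁ 0 < q₂ 0 + p₂ 0) :
    (∀ s ∈ Icc 0 t, q₁ s ≤ q₂ s) ∧ p₁ t - p₂ t ≤ (8 + 3 / q₁ t) * (q₂ t - q₁ t) := by
  have hq₁ : 0 < q₁ t := h₁.pos t ⟨ht, le_rfl⟩
  have hquot : 0 ≤ 3 / q₁ t := by positivity
  have hIcc (hstart : q₁ 0 ≤ q₂ 0) (hlt : ∀ s ∈ Ioc 0 t, q₁ s < q₂ s) :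
      ∀ s ∈ Icc 0 t, q₁ s ≤ q₂ s := fun s hs => by
    rcases hs.1.eq_or_lt with rfl | hs₀
    · exact hstart
    · exact (hlt s ⟨hs₀, hs.2⟩).le
  rcases lt_cases_of_add_lt_of_mem_Dset h₁.start_mem h₂.start_mem hlabel with
    ⟨hz₁, hz₂, hp⟩ | ⟨hq, hp⟩
  · have hle := hIcc (hz₁.trans hz₂.symm).le (h₁.position_lt_of_start_eq_zero h₂ hz₁ hz₂ hp)
    refine ⟨hle, (h₁.momentum_sub_le_of_start_eq_zero h₂ hz₁ hz₂ ht hle).trans ?_⟩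
    nlinarith [hle t ⟨ht.le, le_rfl⟩]
  · have hle := hIcc hq.le (h₁.position_lt_of_start_lt h₂ hq hp)
    have hle_t := hle t ⟨ht.le, le_rfl⟩
    refine ⟨hle, (h₁.momentum_sub_le_of_start_lt h₂ hq hp hle_t).trans ?_⟩
    nlinarith

lemma abs_momentum_sub_le_of_label_lt (h₁ : IsAdmissible q₁ p₁ t) (h₂ : IsAdmissible q₂ p₂ t)
    (hε : 0 < ε) (ht : ε ≤ t) (hq₁ : ε ≤ q₁ t) (hlabel : q₁ 0 + p₁ 0 < q₂ 0 + p₂ 0) :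
    |p₁ t - p₂ t| ≤ (8 + 3 / ε) * |q₁ t - q₂ t| := by
  obtain ⟨hle, hlower⟩ := h₁.position_le_and_momentum_sub_le h₂ (hε.trans_le ht) hlabel
  have hupper := h₁.isNewtonOrbit.momentum_sub_le (L := 4) (by norm_num)
    (fun x y hxy => by
      have hlip := lipschitzWith_g'.dist_le_mul y x
      rw [Real.dist_eq, Real.dist_eq, abs_of_nonneg (sub_nonneg.2 hxy)] at hlip
      norm_num at hlip ⊢
      linarith [neg_le_of_abs_le hlip])
    h₂.isNewtonOrbit (hε.trans_le ht) hle
  have hdist : 0 ≤ q₂ t - q₁ t := sub_nonneg.2 (hle t ⟨hε.le.trans ht, le_rfl⟩)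
  have hquot_t : 1 / t ≤ 3 / ε := div_le_div₀ (by norm_num) (by norm_num) hε ht
  have hquot_q : 3 / q₁ t ≤ 3 / ε := div_le_div_of_nonneg_left (by norm_num) hε hq₁
  rw [abs_sub_comm (q₁ t), abs_of_nonneg hdist, abs_le]
  constructor <;> nlinarith

lemma abs_momentum_sub_le (h₁ : IsAdmissible q₁ p₁ t) (h₂ : IsAdmissible q₂ p₂ t)
    (hε : 0 < ε) (ht : ε ≤ t) (hq₁ : ε ≤ q₁ t) (hq₂ : ε ≤ q₂ t) :
    |p₁ t - p₂ t| ≤ (8 + 3 / ε) * |q₁ t - q₂ t| := by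
  rcases lt_trichotomy (q₁ 0 + p₁ 0) (q₂ 0 + p₂ 0) with hlabel | hlabel | hlabel
  · exact h₁.abs_momentum_sub_le_of_label_lt h₂ hε ht hq₁ hlabel
  · have hstart := Prod.mk.inj (eq_of_add_eq_of_mem_Dset h₁.start_mem h₂.start_mem hlabel)
    obtain ⟨rfl, rfl⟩ :=
      h₁.isNewtonOrbit.eq_of_eq_at lipschitzWith_g' h₂.isNewtonOrbit hstart.1 hstart.2
    simp
  · rw [abs_sub_comm, abs_sub_comm (q₁ t)]
    exact h₂.abs_momentum_sub_le_of_label_lt h₁ hε ht hq₂ hlabel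

lemma momentum_eq (h₁ : IsAdmissible q₁ p₁ t) (h₂ : IsAdmissible q₂ p₂ t) (ht : 0 < t)
    (hq : q₁ t = q₂ t) : p₁ t = p₂ t := by
  have hpos : 0 < min t (q₁ t) := lt_min ht (h₁.pos t ⟨ht, le_rfl⟩)
  have hle := h₁.abs_momentum_sub_le h₂ hpos (min_le_left _ _) (min_le_right _ _)
    (hq ▸ min_le_right _ _)
  rw [hq, sub_self, abs_zero, mul_zero] at hle
  exact sub_eq_zero.1 (abs_nonpos_iff.1 hle)

lemma abs_position_sub_le (h : IsAdmissible q p t) (r s : ℝ) : |q r - q s| ≤ 3 * |r - s| :=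
  abs_sub_le_of_forall_hasDerivAt h.isNewtonOrbit.hasDerivAt_position h.abs_momentum_le r s

lemma abs_momentum_sub_le_time (h : IsAdmissible q p t) (r s : ℝ) : |p r - p s| ≤ 8 * |r - s| :=
  abs_sub_le_of_forall_hasDerivAt h.isNewtonOrbit.hasDerivAt_momentum
    (fun s => by simpa using abs_g'_le (q s)) r s

lemma start_momentum_eq_two (h : IsAdmissible q p t) (ht : 0 < t) (hq : 3 * t < q t) :
    p 0 = 2 := by
  rcases mem_Dset_iff.1 h.start_mem with ⟨-, hp⟩ | ⟨hq₀, -⟩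
  · exact hp
  · have hdist := h.abs_position_sub_le t 0
    simp only at hq₀
    rw [hq₀, sub_zero, sub_zero, abs_of_pos ht] at hdist
    exact absurd (le_of_abs_le hdist) hq.not_ge

lemma abs_momentum_sub_two_le (h : IsAdmissible q p t) (ht : 0 < t) (hq : 3 * t < q t) :
    |p t - 2| ≤ 8 * t := by
  simpa [h.start_momentum_eq_two ht hq, abs_of_pos ht] using h.abs_momentum_sub_le_time t 0

lemma momentum_le_div (h : IsAdmissible q p t) (ht : 0 < t) : p t ≤ q t / t := by
  have hle := h.isNewtonOrbit.mul_momentum_le ht.le fun s hs => g'_nonneg (h.pos s hs).le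
  rw [le_div_iff₀ ht]
  linarith [fst_nonneg_of_mem_Dset h.start_mem]

end IsAdmissible

end Admissible

section BoundedLipschitz

/-- Bounded Lipschitz real functions. Unlike Lipschitz functions they are closed under products,
which is what makes the truncated entropy fluxes Lipschitz. -/
structure IsBoundedLipschitz {X : Type*} [PseudoMetricSpace X] (h : X → ℝ) : Prop where
  lipschitz : ∃ C, LipschitzWith C h
  bounded : ∃ B, ∀ x, |h x| ≤ B

namespace IsBoundedLipschitz

variable {X : Type*} [PseudoMetricSpace X] {h₁ h₂ : X → ℝ}

lemma mul (hh₁ : IsBoundedLipschitz h₁) (hh₂ : IsBoundedLipschitz h₂) :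
    IsBoundedLipschitz fun x => h₁ x * h₂ x := by
  obtain ⟨⟨C₁, hC₁⟩, B₁, hB₁⟩ := hh₁
  obtain ⟨⟨C₂, hC₂⟩, B₂, hB₂⟩ := hh₂
  refine ⟨⟨B₁.toNNReal * C₂ + B₂.toNNReal * C₁, LipschitzWith.of_dist_le_mul fun x y => ?_⟩,
    B₁ * B₂, fun x => ?_⟩
  · have hlip₁ := hC₁.dist_le_mul x y
    have hlip₂ := hC₂.dist_le_mul x y
    rw [Real.dist_eq] at hlip₁ hlip₂ ⊢
    push_cast
    calc |h₁ x * h₂ x - h₁ y * h₂ y| = |h₁ x * (h₂ x - h₂ y) + h₂ y * (h₁ x - h₁ y)| := by ring_nf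
      _ ≤ |h₁ x| * |h₂ x - h₂ y| + |h₂ y| * |h₁ x - h₁ y| := by
        rw [← abs_mul, ← abs_mul]; exact abs_add_le _ _
      _ ≤ max B₁ 0 * (C₂ * dist x y) + max B₂ 0 * (C₁ * dist x y) := by
        gcongr
        · exact (hB₁ x).trans (le_max_left _ _)
        · exact (hB₂ y).trans (le_max_left _ _)
      _ = (max B₁ 0 * C₂ + max B₂ 0 * C₁) * dist x y := by ring
  · rw [abs_mul]
    exact mul_le_mul (hB₁ x) (hB₂ x) (abs_nonneg _) ((abs_nonneg _).trans (hB₁ x))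

lemma comp_lipschitzWith {A : ℝ → ℝ} {K : NNReal} (hA : LipschitzWith K A)
    (hh₁ : IsBoundedLipschitz h₁) : IsBoundedLipschitz fun x => A (h₁ x) := by
  obtain ⟨⟨C, hC⟩, B, hB⟩ := hh₁
  refine ⟨⟨K * C, hA.comp hC⟩, K * B + |A 0|, fun x => ?_⟩
  have hdist := hA.dist_le_mul (h₁ x) 0
  rw [Real.dist_eq, Real.dist_eq, sub_zero] at hdist
  have hmul : K * |h₁ x| ≤ K * B := mul_le_mul_of_nonneg_left (hB x) K.2
  linarith [abs_sub_abs_le_abs_sub (A (h₁ x)) (A 0)]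

end IsBoundedLipschitz

end BoundedLipschitz

section IntegrationByParts

variable {v : ℝ × ℝ → ℝ} {C : NNReal}

lemma hasDerivAt_slice_fst {D : ℝ × ℝ →L[ℝ] ℝ} {z : ℝ × ℝ} (h : HasFDerivAt v D z) :
    HasDerivAt (fun s => v (s, z.2)) (D (1, 0)) z.1 :=
  HasFDerivAt.comp_hasDerivAt (f := fun s : ℝ => (s, z.2)) z.1 h
    ((hasDerivAt_id z.1).prodMk (hasDerivAt_const z.1 z.2))

lemma hasDerivAt_slice_snd {D : ℝ × ℝ →L[ℝ] ℝ} {z : ℝ × ℝ} (h : HasFDerivAt v D z) :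
    HasDerivAt (fun y => v (z.1, y)) (D (0, 1)) z.2 :=
  HasFDerivAt.comp_hasDerivAt (f := fun y : ℝ => (z.1, y)) z.2 h
    ((hasDerivAt_const z.2 z.1).prodMk (hasDerivAt_id z.2))

lemma integrable_of_hasCompactSupport_of_bound {X : Type*} [TopologicalSpace X] [MeasurableSpace X]
    {μ : Measure X} [IsFiniteMeasureOnCompacts μ] {h : X → ℝ} {B : ℝ}
    (hc : HasCompactSupport h) (hm : AEStronglyMeasurable h μ) (hB : ∀ x, ‖h x‖ ≤ B) :
    Integrable h μ :=
  memLp_one_iff_integrable.1 (hc.memLp_of_bound hm B (Eventually.of_forall hB))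

lemma setIntegral_Ioi_deriv_of_lipschitzWith {h : ℝ → ℝ} (hL : LipschitzWith C h)
    (hc : HasCompactSupport h) (a : ℝ) : ∫ x in Ioi a, deriv h x = -h a := by
  have hint : IntegrableOn (deriv h) (Ioi a) :=
    (integrable_of_hasCompactSupport_of_bound hc.deriv (measurable_deriv h).aestronglyMeasurable
      fun _ => norm_deriv_le_of_lipschitz hL).integrableOn
  have hinterval (b : ℝ) : ∫ x in a..b, deriv h x = h b - h a :=
    (hL.lipschitzOnWith (s := uIcc a b)).absolutelyContinuousOnInterval.integral_deriv_eq_sub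
  have htop : Tendsto h atTop (𝓝 0) := hc.is_zero_at_infty.mono_left atTop_le_cocompact
  have hlim := intervalIntegral_tendsto_integral_Ioi a hint tendsto_id
  simp only [id_eq, hinterval] at hlim
  simpa using tendsto_nhds_unique hlim (htop.sub_const (h a))

lemma lipschitzWith_slice_snd (hL : LipschitzWith C v) (t : ℝ) :
    LipschitzWith C fun y => v (t, y) :=
  mul_one C ▸ hL.comp (LipschitzWith.prodMk_left t)

lemma lipschitzWith_comp_swap (hL : LipschitzWith C v) : LipschitzWith C (v ∘ Prod.swap) := by
  have h := hL.comp (LipschitzWith.prod_snd.prodMk LipschitzWith.prod_fst)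
  rwa [max_self, mul_one] at h

lemma hasCompactSupport_slice_snd (hc : HasCompactSupport v) (t : ℝ) :
    HasCompactSupport fun y => v (t, y) :=
  hc.comp_isClosedEmbedding (Topology.IsClosedEmbedding.of_continuous_injective_isClosedMap
    (by fun_prop) (Prod.mk_right_injective t) (isClosedMap_prodMk_left t))

lemma integrable_deriv_slice_snd (hL : LipschitzWith C v) (hc : HasCompactSupport v) :
    Integrable fun z : ℝ × ℝ => deriv (fun y => v (z.1, y)) z.2 := by
  have hsupport : HasCompactSupport fun z : ℝ × ℝ => deriv (fun y => v (z.1, y)) z.2 := by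
    refine hc.mono' fun z hz => ?_
    contrapose! hz
    have hslice : (fun y => v (z.1, y)) =ᶠ[𝓝 z.2] fun _ => 0 :=
      (Continuous.prodMk_right z.1).continuousAt.eventually
        (notMem_tsupport_iff_eventuallyEq.1 hz)
    simp [hslice.deriv_eq]
  exact integrable_of_hasCompactSupport_of_bound hsupport
    (measurable_deriv_with_param (f := fun t y => v (t, y)) hL.continuous).aestronglyMeasurable
    fun z => norm_deriv_le_of_lipschitz (lipschitzWith_slice_snd hL z.1)

lemma setIntegral_deriv_slice_snd (hL : LipschitzWith C v) (hc : HasCompactSupport v) (a b : ℝ) :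
    ∫ z in Ioi a ×ˢ Ioi b, deriv (fun y => v (z.1, y)) z.2 = -∫ t in Ioi a, v (t, b) := by
  rw [Measure.volume_eq_prod, setIntegral_prod _ (integrable_deriv_slice_snd hL hc).integrableOn,
    ← integral_neg]
  exact integral_congr_ae (Eventually.of_forall fun t => setIntegral_Ioi_deriv_of_lipschitzWith
    (lipschitzWith_slice_snd hL t) (hasCompactSupport_slice_snd hc t) b)

lemma integrable_deriv_slice_fst (hL : LipschitzWith C v) (hc : HasCompactSupport v) :
    Integrable fun z : ℝ × ℝ => deriv (fun s => v (s, z.2)) z.1 :=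
  (integrable_deriv_slice_snd (v := v ∘ Prod.swap)
    (lipschitzWith_comp_swap hL)
    (hc.comp_homeomorph (Homeomorph.prodComm ℝ ℝ))).swap

lemma setIntegral_deriv_slice_fst (hL : LipschitzWith C v) (hc : HasCompactSupport v) (a b : ℝ) :
    ∫ z in Ioi a ×ˢ Ioi b, deriv (fun s => v (s, z.2)) z.1 = -∫ x in Ioi b, v (a, x) := by
  have hswap := setIntegral_deriv_slice_snd (v := v ∘ Prod.swap)
    (lipschitzWith_comp_swap hL)
    (hc.comp_homeomorph (Homeomorph.prodComm ℝ ℝ)) b a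
  rw [Measure.volume_eq_prod] at hswap ⊢
  rw [← setIntegral_prod_swap]
  exact hswap

end IntegrationByParts

section Kruzhkov

/-- The entropy flux `sgn (v - k) * (v² / 2 - k² / 2)` of the Kruzhkov entropy `|v - k|`, written
without `sgn` so that its continuity is visible. -/
noncomputable def kruzhkovFlux (k v : ℝ) : ℝ := |v - k| * ((v + k) / 2)

/-- The integrand of the Kruzhkov inequality with level `k` and test function `φ` for
`∂ₜu + ∂ₓ(u² / 2) + f = 0`. -/
noncomputable def kruzhkovIntegrand (f : ℝ → ℝ) (u φ : ℝ → ℝ → ℝ) (k t x : ℝ) : ℝ :=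
  |u t x - k| * deriv (fun s => φ s x) t
    + Real.sign (u t x - k) * ((u t x) ^ 2 / 2 - k ^ 2 / 2) * deriv (fun y => φ t y) x
    - Real.sign (u t x - k) * f x * φ t x

lemma sign_mul_self_eq_abs (a : ℝ) : Real.sign a * a = |a| := by
  rcases lt_trichotomy a 0 with h | rfl | h
  · rw [Real.sign_of_neg h, abs_of_neg h, neg_one_mul]
  · simp
  · rw [Real.sign_of_pos h, abs_of_pos h, one_mul]

lemma measurable_sign : Measurable Real.sign :=
  Measurable.ite measurableSet_Iio measurable_const
    (Measurable.ite measurableSet_Ioi measurable_const measurable_const)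

lemma abs_sign_le_one (a : ℝ) : |Real.sign a| ≤ 1 := by
  rcases Real.sign_apply_eq a with h | h | h <;> norm_num [h]

lemma sign_mul_eq_kruzhkovFlux (k v : ℝ) :
    Real.sign (v - k) * (v ^ 2 / 2 - k ^ 2 / 2) = kruzhkovFlux k v := by
  rw [kruzhkovFlux, ← sign_mul_self_eq_abs]; ring

lemma continuous_kruzhkovFlux (k : ℝ) : Continuous (kruzhkovFlux k) := by
  unfold kruzhkovFlux; fun_prop

lemma kruzhkovFlux_add_kruzhkovFlux_neg_le (k v : ℝ) :
    kruzhkovFlux k v + kruzhkovFlux (-k) v ≤ max v 0 ^ 2 := by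
  unfold kruzhkovFlux
  rcases max_cases v 0 with ⟨hv, hv'⟩ | ⟨hv, hv'⟩ <;>
    rcases abs_cases (v - k) with ⟨h₁, h₁'⟩ | ⟨h₁, h₁'⟩ <;>
    rcases abs_cases (v - -k) with ⟨h₂, h₂'⟩ | ⟨h₂, h₂'⟩ <;>
    rw [hv, h₁, h₂] <;> nlinarith [sq_nonneg k, sq_nonneg v]

lemma lipschitzWith_abs_sub (k : ℝ) : LipschitzWith 1 fun v : ℝ => |v - k| :=
  LipschitzWith.of_dist_le_mul fun x y => by
    simpa [Real.dist_eq] using abs_abs_sub_abs_le_abs_sub (x - k) (y - k)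

lemma IsBoundedLipschitz.kruzhkovFlux {X : Type*} [PseudoMetricSpace X] {w : X → ℝ}
    (hw : IsBoundedLipschitz w) (k : ℝ) : IsBoundedLipschitz fun x => kruzhkovFlux k (w x) := by
  have hmean : LipschitzWith 1 fun v : ℝ => (v + k) / 2 :=
    LipschitzWith.of_dist_le_mul fun x y => by
      rw [Real.dist_eq, Real.dist_eq, ← sub_div, add_sub_add_right_eq_sub, abs_div, abs_two]
      norm_num
  exact (hw.comp_lipschitzWith (lipschitzWith_abs_sub k)).mul (hw.comp_lipschitzWith hmean)

variable {E : Type*} [NormedAddCommGroup E] [NormedSpace ℝ E] {w : E → ℝ} {D : E →L[ℝ] ℝ} {z : E}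
  {k : ℝ}

lemma hasFDerivAt_abs_sub (hw : HasFDerivAt w D z)
    (habs : DifferentiableAt ℝ (fun y => |w y - k|) z) :
    HasFDerivAt (fun y => |w y - k|) (Real.sign (w z - k) • D) z := by
  rcases lt_trichotomy (w z - k) 0 with h | h | h
  · rw [Real.sign_of_neg h]
    exact (hasDerivAt_abs_neg h).comp_hasFDerivAt z (hw.sub_const k)
  · have hmin : IsLocalMin (fun y => |w y - k|) z := Eventually.of_forall fun y => by
      simp only [h, abs_zero, abs_nonneg]
    rw [h, Real.sign_zero, zero_smul, ← hmin.fderiv_eq_zero]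
    exact habs.hasFDerivAt
  · rw [Real.sign_of_pos h]
    exact (hasDerivAt_abs_pos h).comp_hasFDerivAt z (hw.sub_const k)

lemma hasFDerivAt_kruzhkovFlux (hw : HasFDerivAt w D z)
    (habs : DifferentiableAt ℝ (fun y => |w y - k|) z) :
    HasFDerivAt (fun y => kruzhkovFlux k (w y)) ((Real.sign (w z - k) * w z) • D) z := by
  refine ((hasFDerivAt_abs_sub hw habs).mul ((hw.add_const k).mul_const 2⁻¹)).congr_fderiv ?_
  ext y
  simp only [add_apply, smul_apply, smul_eq_mul]
  rw [← sign_mul_self_eq_abs]; ring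

end Kruzhkov

section TestFunction

/-- The test functions `φ(t, x)` of the entropy inequality, at `C¹` regularity; they live on the
whole plane, so that the initial line `t = 0` is interior to their domain. -/
structure IsTestFunction (φ : ℝ → ℝ → ℝ) : Prop where
  contDiff : ContDiff ℝ 1 (Function.uncurry φ)
  hasCompactSupport : HasCompactSupport (Function.uncurry φ)

namespace IsTestFunction

variable {φ : ℝ → ℝ → ℝ}

lemma reflect (h : IsTestFunction φ) : IsTestFunction fun t x => φ t (-x) where
  contDiff := h.contDiff.comp (contDiff_fst.prodMk contDiff_snd.neg)
  hasCompactSupport :=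
    h.hasCompactSupport.comp_homeomorph ((Homeomorph.refl ℝ).prodCongr (Homeomorph.neg ℝ))

lemma flip (h : IsTestFunction φ) : IsTestFunction fun x t => φ t x where
  contDiff := h.contDiff.comp (contDiff_snd.prodMk contDiff_fst)
  hasCompactSupport := h.hasCompactSupport.comp_homeomorph (Homeomorph.prodComm ℝ ℝ)

lemma exists_lipschitzWith (h : IsTestFunction φ) : ∃ C, LipschitzWith C (Function.uncurry φ) :=
  h.contDiff.lipschitzWith_of_hasCompactSupport h.hasCompactSupport one_ne_zero

lemma isBoundedLipschitz (h : IsTestFunction φ) : IsBoundedLipschitz (Function.uncurry φ) :=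
  ⟨h.exists_lipschitzWith, h.hasCompactSupport.exists_bound_of_continuous h.contDiff.continuous⟩

lemma continuous_slice (h : IsTestFunction φ) (t : ℝ) : Continuous (φ t) :=
  h.contDiff.continuous.comp (Continuous.prodMk_right t)

lemma integrable_slice (h : IsTestFunction φ) (t : ℝ) : Integrable (φ t) :=
  (h.continuous_slice t).integrable_of_hasCompactSupport
    (hasCompactSupport_slice_snd h.hasCompactSupport t)

lemma integrable_deriv_fst (h : IsTestFunction φ) :
    Integrable fun z : ℝ × ℝ => deriv (fun s => φ s z.2) z.1 :=
  let ⟨_, hC⟩ := h.exists_lipschitzWith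
  integrable_deriv_slice_fst hC h.hasCompactSupport

lemma integrable_deriv_snd (h : IsTestFunction φ) :
    Integrable fun z : ℝ × ℝ => deriv (φ z.1) z.2 :=
  let ⟨_, hC⟩ := h.exists_lipschitzWith
  integrable_deriv_slice_snd hC h.hasCompactSupport

lemma integrable_mul_comp_snd (h : IsTestFunction φ) {f : ℝ → ℝ} (hf : Continuous f) :
    Integrable fun z : ℝ × ℝ => f z.2 * φ z.1 z.2 :=
  ((hf.comp continuous_snd).mul h.contDiff.continuous).integrable_of_hasCompactSupport
    h.hasCompactSupport.mul_left

lemma exists_integrable_envelope (h : IsTestFunction φ) :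
    ∃ b, Integrable b ∧ ∀ t x, |φ t x| ≤ b x := by
  obtain ⟨B, hB⟩ := h.isBoundedLipschitz.bounded
  have hK : IsCompact (Prod.snd '' tsupport (Function.uncurry φ)) :=
    h.hasCompactSupport.isCompact.image continuous_snd
  refine ⟨(Prod.snd '' tsupport (Function.uncurry φ)).indicator fun _ => B,
    (integrable_indicator_iff hK.measurableSet).2 (integrableOn_const hK.measure_ne_top),
    fun t x => ?_⟩
  by_cases hx : (t, x) ∈ tsupport (Function.uncurry φ)
  · rw [indicator_of_mem (mem_image_of_mem Prod.snd hx)]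
    exact hB (t, x)
  · rw [show φ t x = 0 from image_eq_zero_of_notMem_tsupport (f := Function.uncurry φ) hx, abs_zero]
    exact indicator_nonneg (fun _ _ => (abs_nonneg _).trans (hB 0)) x

end IsTestFunction

end TestFunction

section Identity

variable {f : ℝ → ℝ} {c k ε t x : ℝ} {u v φ : ℝ → ℝ → ℝ}

lemma deriv_add_deriv_eq_kruzhkovIntegrand {D : ℝ × ℝ →L[ℝ] ℝ} {z : ℝ × ℝ}
    (hv : HasFDerivAt (Function.uncurry v) D z)
    (habs : DifferentiableAt ℝ (fun y => |Function.uncurry v y - k|) z)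
    (hφ : DifferentiableAt ℝ (Function.uncurry φ) z)
    (hD : D (1, 0) + v z.1 z.2 * D (0, 1) = -f z.2) :
    deriv (fun s => |v s z.2 - k| * φ s z.2) z.1
        + deriv (fun y => kruzhkovFlux k (v z.1 y) * φ z.1 y) z.2
      = kruzhkovIntegrand f v φ k z.1 z.2 := by
  have hφt := hasDerivAt_slice_fst hφ.hasFDerivAt
  have hφx := hasDerivAt_slice_snd hφ.hasFDerivAt
  have hentropy := (hasDerivAt_slice_fst (hasFDerivAt_abs_sub hv habs)).fun_mul hφt
  have hflux := (hasDerivAt_slice_snd (hasFDerivAt_kruzhkovFlux hv habs)).fun_mul hφx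
  simp only [Function.uncurry_apply_pair, Function.uncurry_def, smul_apply, smul_eq_mul]
    at hφt hφx hentropy hflux
  rw [kruzhkovIntegrand, sign_mul_eq_kruzhkovFlux, hentropy.deriv,
    hflux.deriv, hφt.deriv, hφx.deriv]
  linear_combination (Real.sign (v z.1 z.2 - k) * φ z.1 z.2) * hD

/-- The restriction of `u` to the quadrant `[ε, ∞)²`, extended to the plane by composing with the
projection onto the quadrant. -/
def truncate (ε : ℝ) (u : ℝ → ℝ → ℝ) (t x : ℝ) : ℝ := u (max ε t) (max ε x)

lemma truncate_eq (ht : ε ≤ t) (hx : ε ≤ x) : truncate ε u t x = u t x := by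
  rw [truncate, max_eq_right ht, max_eq_right hx]

/-- `u` is a locally Lipschitz solution of `∂ₜu + ∂ₓ(u² / 2) + f = 0` on the quadrant `(0, ∞)²`
with initial value `c` and with nonpositive trace on the axis `x = 0`, the equation being expressed
by a characteristic that reaches each point `(t, x)` from the past. -/
structure IsQuadrantSolution (f : ℝ → ℝ) (c : ℝ) (u : ℝ → ℝ → ℝ) : Prop where
  bounded : ∃ B, ∀ t x, 0 < t → 0 < x → |u t x| ≤ B
  lipschitz : ∀ ε, 0 < ε → ∃ K, LipschitzOnWith K (Function.uncurry u) (Ici ε ×ˢ Ici ε)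
  characteristic : ∀ t x, 0 < t → 0 < x → ∃ q : ℝ → ℝ, q t = x ∧ HasDerivAt q (u t x) t ∧
    HasDerivWithinAt (fun s => u s (q s)) (-f x) (Iic t) t
  initial : ∀ x, 0 < x → Tendsto (fun t => u t x) (𝓝[>] 0) (𝓝 c)
  boundary : ∀ t, 0 < t → Tendsto (fun x => max (u t x) 0) (𝓝[>] 0) (𝓝 0)

namespace IsQuadrantSolution

lemma isBoundedLipschitz_truncate (hu : IsQuadrantSolution f c u) (hε : 0 < ε) :
    IsBoundedLipschitz (Function.uncurry (truncate ε u)) := by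
  obtain ⟨K, hK⟩ := hu.lipschitz ε hε
  obtain ⟨B, hB⟩ := hu.bounded
  have hproj : LipschitzWith 1 fun z : ℝ × ℝ => (max ε z.1, max ε z.2) := by
    simpa only [max_self] using
      (LipschitzWith.prod_fst.const_max ε).prodMk (LipschitzWith.prod_snd.const_max ε)
  refine ⟨⟨K * 1, lipschitzOnWith_univ.1 (hK.comp hproj.lipschitzOnWith fun z _ => ?_)⟩, B,
    fun z => hB _ _ (hε.trans_le (le_max_left _ _)) (hε.trans_le (le_max_left _ _))⟩
  exact ⟨le_max_left ε z.1, le_max_left ε z.2⟩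

lemma fderiv_characteristic (hu : IsQuadrantSolution f c u) {z : ℝ × ℝ} (ht : 0 < z.1)
    (hx : 0 < z.2) {D : ℝ × ℝ →L[ℝ] ℝ} (hD : HasFDerivAt (Function.uncurry u) D z) :
    D (1, 0) + u z.1 z.2 * D (0, 1) = -f z.2 := by
  obtain ⟨q, hq, hq', hchar⟩ := hu.characteristic z.1 z.2 ht hx
  have hcurve : HasDerivAt (fun s => (s, q s)) (1, u z.1 z.2) z.1 :=
    (hasDerivAt_id z.1).prodMk hq'
  have hcomp : HasDerivAt (fun s => u s (q s)) (D (1, u z.1 z.2)) z.1 :=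
    HasFDerivAt.comp_hasDerivAt (l := Function.uncurry u) z.1 (by rwa [hq]) hcurve
  have hsplit : D (1, u z.1 z.2) = D (1, 0) + u z.1 z.2 * D (0, 1) := by
    rw [← smul_eq_mul, ← map_smul, ← map_add]; simp
  rw [← hsplit]
  exact (uniqueDiffOn_Iic z.1 z.1 self_mem_Iic).eq_deriv _ hcomp.hasDerivWithinAt hchar

lemma ae_deriv_add_deriv_truncate_eq (hu : IsQuadrantSolution f c u) (hφ : IsTestFunction φ)
    (hε : 0 < ε) (k : ℝ) : ∀ᵐ z ∂volume.restrict (Ioi ε ×ˢ Ioi ε),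
      deriv (fun s => |truncate ε u s z.2 - k| * φ s z.2) z.1
          + deriv (fun y => kruzhkovFlux k (truncate ε u z.1 y) * φ z.1 y) z.2
        = kruzhkovIntegrand f u φ k z.1 z.2 := by
  have hv := hu.isBoundedLipschitz_truncate hε
  obtain ⟨_, hlip⟩ := hv.lipschitz
  obtain ⟨_, hlip_abs⟩ := (hv.comp_lipschitzWith (lipschitzWith_abs_sub k)).lipschitz
  rw [ae_restrict_iff' (measurableSet_Ioi.prod measurableSet_Ioi)]
  filter_upwards [hlip.ae_differentiableAt, hlip_abs.ae_differentiableAt]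
    with z hdiff hdiff_abs ⟨ht, hx⟩
  have hz : truncate ε u z.1 z.2 = u z.1 z.2 := truncate_eq (le_of_lt ht) (le_of_lt hx)
  have hlocal : Function.uncurry (truncate ε u) =ᶠ[𝓝 z] Function.uncurry u := by
    filter_upwards [prod_mem_nhds (Ioi_mem_nhds ht) (Ioi_mem_nhds hx)] with w hw
    exact truncate_eq (le_of_lt hw.1) (le_of_lt hw.2)
  have hpde := hu.fderiv_characteristic (hε.trans ht) (hε.trans hx)
    (hdiff.hasFDerivAt.congr_of_eventuallyEq hlocal.symm)
  rw [← hz] at hpde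
  rw [deriv_add_deriv_eq_kruzhkovIntegrand hdiff.hasFDerivAt hdiff_abs
    (hφ.contDiff.differentiable one_ne_zero z) hpde, kruzhkovIntegrand, kruzhkovIntegrand, hz]

lemma setIntegral_kruzhkovIntegrand_eq (hu : IsQuadrantSolution f c u) (hφ : IsTestFunction φ)
    (hε : 0 < ε) (k : ℝ) :
    ∫ z in Ioi ε ×ˢ Ioi ε, kruzhkovIntegrand f u φ k z.1 z.2
      = -(∫ x in Ioi ε, |u ε x - k| * φ ε x) - ∫ t in Ioi ε, kruzhkovFlux k (u t ε) * φ t ε := by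
  have hv := hu.isBoundedLipschitz_truncate hε
  have hentropy := (hv.comp_lipschitzWith (lipschitzWith_abs_sub k)).mul hφ.isBoundedLipschitz
  have hflux := (hv.kruzhkovFlux k).mul hφ.isBoundedLipschitz
  obtain ⟨_, hentropy⟩ := hentropy.lipschitz
  obtain ⟨_, hflux⟩ := hflux.lipschitz
  have hsupport := hφ.hasCompactSupport
  rw [← integral_congr_ae (hu.ae_deriv_add_deriv_truncate_eq hφ hε k), sub_eq_add_neg]
  refine (integral_add (integrable_deriv_slice_fst hentropy hsupport.mul_left).integrableOn
    (integrable_deriv_slice_snd hflux hsupport.mul_left).integrableOn).trans ?_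
  congr 1
  · refine (setIntegral_deriv_slice_fst hentropy hsupport.mul_left ε ε).trans (congrArg Neg.neg ?_)
    refine setIntegral_congr_fun measurableSet_Ioi fun x hx => ?_
    simp only [Function.uncurry_apply_pair, truncate_eq le_rfl (le_of_lt hx)]
  · refine (setIntegral_deriv_slice_snd hflux hsupport.mul_left ε ε).trans (congrArg Neg.neg ?_)
    refine setIntegral_congr_fun measurableSet_Ioi fun t ht => ?_
    simp only [Function.uncurry_apply_pair, truncate_eq (le_of_lt ht) le_rfl]

end IsQuadrantSolution

end Identity

section Limit

variable {f : ℝ → ℝ} {c k ε t x : ℝ} {u φ : ℝ → ℝ → ℝ}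

lemma exists_abs_le_of_continuous {A : ℝ → ℝ} (hA : Continuous A) (B : ℝ) :
    ∃ C, ∀ y, |y| ≤ B → |A y| ≤ C :=
  let ⟨C, hC⟩ := (isCompact_Icc (a := -B) (b := B)).exists_bound_of_continuousOn hA.continuousOn
  ⟨C, fun y hy => hC y (abs_le.1 hy)⟩

lemma integrableOn_comp_mul {X : Type*} [MeasurableSpace X] {μ : Measure X} {S : Set X}
    {A : ℝ → ℝ} {v χ : X → ℝ} {B C : ℝ} (hS : MeasurableSet S) (hA : Measurable A)
    (hAC : ∀ y, |y| ≤ B → |A y| ≤ C) (hv : AEMeasurable v (μ.restrict S))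
    (hvB : ∀ z ∈ S, |v z| ≤ B) (hχ : IntegrableOn χ S μ) :
    IntegrableOn (fun z => A (v z) * χ z) S μ :=
  Integrable.bdd_mul hχ (hA.comp_aemeasurable hv).aestronglyMeasurable
    (ae_restrict_of_forall_mem hS fun z hz => hAC _ (hvB z hz))

lemma tendsto_setIntegral_Ioi_of_dominated {w : ℝ → ℝ → ℝ} {w₀ b : ℝ → ℝ}
    (hm : ∀ ε, 0 < ε → AEStronglyMeasurable (w ε) (volume.restrict (Ioi 0)))
    (hb : IntegrableOn b (Ioi 0)) (hwb : ∀ ε x, 0 < ε → 0 < x → |w ε x| ≤ b x)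
    (hlim : ∀ x, 0 < x → Tendsto (fun ε => w ε x) (𝓝[>] 0) (𝓝 (w₀ x))) :
    Tendsto (fun ε => ∫ x in Ioi ε, w ε x) (𝓝[>] 0) (𝓝 (∫ x in Ioi 0, w₀ x)) := by
  have hindicator : Tendsto (fun ε => ∫ x in Ioi 0, (Ioi ε).indicator (w ε) x) (𝓝[>] 0)
      (𝓝 (∫ x in Ioi 0, w₀ x)) := by
    refine tendsto_integral_filter_of_dominated_convergence b ?_ ?_ hb ?_
    · filter_upwards [self_mem_nhdsWithin] with ε hε
      exact (hm ε hε).indicator measurableSet_Ioi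
    · filter_upwards [self_mem_nhdsWithin] with ε hε
      exact ae_restrict_of_forall_mem measurableSet_Ioi fun x hx =>
        (norm_indicator_le_norm_self _ _).trans (hwb ε x hε hx)
    · refine ae_restrict_of_forall_mem measurableSet_Ioi fun x hx => (hlim x hx).congr' ?_
      filter_upwards [nhdsWithin_le_nhds (Iio_mem_nhds (mem_Ioi.1 hx))] with ε hε
      rw [indicator_of_mem (mem_Ioi.2 hε)]
  refine hindicator.congr' ?_
  filter_upwards [self_mem_nhdsWithin] with ε hε
  rw [setIntegral_indicator measurableSet_Ioi, Ioi_inter_Ioi, sup_eq_right.2 (le_of_lt hε)]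

lemma tendsto_setIntegral_Ioi_prod_Ioi {H : ℝ × ℝ → ℝ} (hH : IntegrableOn H (Ioi 0 ×ˢ Ioi 0)) :
    Tendsto (fun ε => ∫ z in Ioi ε ×ˢ Ioi ε, H z) (𝓝[>] 0) (𝓝 (∫ z in Ioi 0 ×ˢ Ioi 0, H z)) := by
  have hcover : AECover (volume.restrict (Ioi (0 : ℝ) ×ˢ Ioi (0 : ℝ))) (𝓝[>] 0)
      fun ε : ℝ => Ioi ε ×ˢ Ioi ε := by
    refine ⟨ae_restrict_of_forall_mem (measurableSet_Ioi.prod measurableSet_Ioi) fun z hz => ?_,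
      fun ε => measurableSet_Ioi.prod measurableSet_Ioi⟩
    filter_upwards [nhdsWithin_le_nhds (Iio_mem_nhds (mem_Ioi.1 hz.1)),
      nhdsWithin_le_nhds (Iio_mem_nhds (mem_Ioi.1 hz.2))] with ε ht hx
    exact ⟨ht, hx⟩
  refine (hcover.integral_tendsto_of_countably_generated hH).congr' ?_
  filter_upwards [self_mem_nhdsWithin] with ε hε
  have hε : Ioi ε ⊆ Ioi 0 := Ioi_subset_Ioi (le_of_lt hε)
  rw [Measure.restrict_restrict (measurableSet_Ioi.prod measurableSet_Ioi),
    inter_eq_left.2 (prod_mono hε hε)]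

/-- A majorant of the two Kruzhkov fluxes, of level `k` from the right and of level `-k` from the
reflected left, through the lines `x = ε` and `x = -ε`. -/
noncomputable def fluxMajorant (u φ : ℝ → ℝ → ℝ) (k ε t : ℝ) : ℝ :=
  max (u t ε) 0 ^ 2 * φ t ε + kruzhkovFlux (-k) (u t ε) * (φ t (-ε) - φ t ε)

namespace IsQuadrantSolution

lemma continuousOn (hu : IsQuadrantSolution f c u) :
    ContinuousOn (Function.uncurry u) (Ioi 0 ×ˢ Ioi 0) := by
  intro z ⟨ht, hx⟩
  obtain ⟨ε, hε, hεz⟩ := exists_between (lt_min (mem_Ioi.1 ht) (mem_Ioi.1 hx))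
  obtain ⟨K, hK⟩ := hu.lipschitz ε hε
  obtain ⟨hεt, hεx⟩ := lt_min_iff.1 hεz
  exact (hK.continuousOn.continuousAt
    (prod_mem_nhds (Ici_mem_nhds hεt) (Ici_mem_nhds hεx))).continuousWithinAt

lemma continuousOn_slice_snd (hu : IsQuadrantSolution f c u) (ht : 0 < t) :
    ContinuousOn (u t) (Ioi 0) :=
  hu.continuousOn.comp (Continuous.prodMk_right t).continuousOn fun _ hx => ⟨ht, hx⟩

lemma continuousOn_slice_fst (hu : IsQuadrantSolution f c u) (hx : 0 < x) :
    ContinuousOn (fun t => u t x) (Ioi 0) :=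
  hu.continuousOn.comp (Continuous.prodMk_left x).continuousOn fun _ ht => ⟨ht, hx⟩

lemma integrableOn_kruzhkovIntegrand (hu : IsQuadrantSolution f c u) (hf : Continuous f)
    (hφ : IsTestFunction φ) (k : ℝ) :
    IntegrableOn (fun z => kruzhkovIntegrand f u φ k z.1 z.2) (Ioi 0 ×ˢ Ioi 0) := by
  obtain ⟨B, hB⟩ := hu.bounded
  have hQ : MeasurableSet (Ioi (0 : ℝ) ×ˢ Ioi (0 : ℝ)) := measurableSet_Ioi.prod measurableSet_Ioi
  have hcomp {A : ℝ → ℝ} {C : ℝ} (hA : Measurable A) (hAC : ∀ y, |y| ≤ B → |A y| ≤ C)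
      {χ : ℝ × ℝ → ℝ} (hχ : Integrable χ) :
      IntegrableOn (fun z => A (u z.1 z.2) * χ z) (Ioi 0 ×ˢ Ioi 0) :=
    integrableOn_comp_mul hQ hA hAC (hu.continuousOn.aemeasurable hQ)
      (fun z hz => hB z.1 z.2 hz.1 hz.2) hχ.integrableOn
  have habs : Continuous fun y : ℝ => |y - k| := by fun_prop
  obtain ⟨C, hC⟩ := exists_abs_le_of_continuous habs B
  obtain ⟨C', hC'⟩ := exists_abs_le_of_continuous (continuous_kruzhkovFlux k) B
  simp only [kruzhkovIntegrand, sign_mul_eq_kruzhkovFlux, mul_assoc]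
  exact ((hcomp habs.measurable hC hφ.integrable_deriv_fst).add
    (hcomp (continuous_kruzhkovFlux k).measurable hC' hφ.integrable_deriv_snd)).sub
    (hcomp (measurable_sign.comp (measurable_id.sub_const k)) (fun y _ => abs_sign_le_one _)
      (hφ.integrable_mul_comp_snd hf))

lemma tendsto_setIntegral_initial (hu : IsQuadrantSolution f c u) (hφ : IsTestFunction φ) (k : ℝ) :
    Tendsto (fun ε => ∫ x in Ioi ε, |u ε x - k| * φ ε x) (𝓝[>] 0)
      (𝓝 (∫ x in Ioi 0, |c - k| * φ 0 x)) := by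
  obtain ⟨B, hB⟩ := hu.bounded
  have habs : Continuous fun y : ℝ => |y - k| := by fun_prop
  obtain ⟨C, hC⟩ := exists_abs_le_of_continuous habs B
  obtain ⟨b, hb, hφb⟩ := hφ.exists_integrable_envelope
  refine tendsto_setIntegral_Ioi_of_dominated (fun ε hε => ?_) (hb.const_mul C).integrableOn
    (fun ε x hε hx => ?_) fun x hx => ?_
  · exact ((habs.comp_continuousOn (hu.continuousOn_slice_snd hε)).mul
      (hφ.continuous_slice ε).continuousOn).aestronglyMeasurable measurableSet_Ioi
  · rw [abs_mul]
    exact mul_le_mul (hC _ (hB ε x hε hx)) (hφb ε x) (abs_nonneg _)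
      ((abs_nonneg _).trans (hC _ (hB ε x hε hx)))
  · exact ((habs.tendsto c).comp (hu.initial x hx)).mul
      (((hφ.flip.continuous_slice x).tendsto 0).mono_left nhdsWithin_le_nhds)

lemma integrableOn_comp_slice_mul (hu : IsQuadrantSolution f c u) (hx : 0 < x) {A χ : ℝ → ℝ}
    (hA : Continuous A) (hχ : Integrable χ) :
    IntegrableOn (fun t => A (u t x) * χ t) (Ioi 0) :=
  let ⟨B, hB⟩ := hu.bounded
  let ⟨_, hC⟩ := exists_abs_le_of_continuous hA B
  integrableOn_comp_mul measurableSet_Ioi hA.measurable hC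
    ((hu.continuousOn_slice_fst hx).aemeasurable measurableSet_Ioi)
    (fun t ht => hB t x ht hx) hχ.integrableOn

lemma integrableOn_fluxMajorant (hu : IsQuadrantSolution f c u) (hφ : IsTestFunction φ)
    (hε : 0 < ε) (k : ℝ) : IntegrableOn (fluxMajorant u φ k ε) (Ioi 0) :=
  (hu.integrableOn_comp_slice_mul hε (A := fun y => max y 0 ^ 2) (by fun_prop)
      (hφ.flip.integrable_slice ε)).add
    (hu.integrableOn_comp_slice_mul hε (continuous_kruzhkovFlux (-k))
      ((hφ.flip.integrable_slice (-ε)).sub (hφ.flip.integrable_slice ε)))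

lemma setIntegral_kruzhkovFlux_add_le (hu : IsQuadrantSolution f c u) (hφ : IsTestFunction φ)
    (hφ₀ : ∀ t x, 0 ≤ φ t x) (hε : 0 < ε) (k : ℝ) :
    (∫ t in Ioi ε, kruzhkovFlux k (u t ε) * φ t ε)
        + (∫ t in Ioi ε, kruzhkovFlux (-k) (u t ε) * φ t (-ε))
      ≤ ∫ t in Ioi ε, fluxMajorant u φ k ε t := by
  have hsub : Ioi ε ⊆ Ioi 0 := Ioi_subset_Ioi hε.le
  have hright := (hu.integrableOn_comp_slice_mul hε (continuous_kruzhkovFlux k)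
    (hφ.flip.integrable_slice ε)).mono_set hsub
  have hleft := (hu.integrableOn_comp_slice_mul hε (continuous_kruzhkovFlux (-k))
    (hφ.flip.integrable_slice (-ε))).mono_set hsub
  rw [← integral_add hright hleft]
  refine setIntegral_mono (hright.add hleft)
    ((hu.integrableOn_fluxMajorant hφ hε k).mono_set hsub) fun t => ?_
  have hmul := mul_le_mul_of_nonneg_right (kruzhkovFlux_add_kruzhkovFlux_neg_le k (u t ε))
    (hφ₀ t ε)
  simp only [fluxMajorant]
  linarith

lemma tendsto_fluxMajorant (hu : IsQuadrantSolution f c u) (hφ : IsTestFunction φ) (k : ℝ)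
    (ht : 0 < t) : Tendsto (fun ε => fluxMajorant u φ k ε t) (𝓝[>] 0) (𝓝 0) := by
  obtain ⟨B, hB⟩ := hu.bounded
  obtain ⟨C, hC⟩ := exists_abs_le_of_continuous (continuous_kruzhkovFlux (-k)) B
  have hright : Tendsto (fun ε => φ t ε) (𝓝[>] 0) (𝓝 (φ t 0)) :=
    ((hφ.continuous_slice t).tendsto 0).mono_left nhdsWithin_le_nhds
  have hleft : Tendsto (fun ε => φ t (-ε)) (𝓝[>] 0) (𝓝 (φ t 0)) := by
    simpa only [neg_zero] using
      ((hφ.reflect.continuous_slice t).tendsto 0).mono_left nhdsWithin_le_nhds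
  have hjump : Tendsto (fun ε => φ t (-ε) - φ t ε) (𝓝[>] 0) (𝓝 0) := by
    simpa only [sub_self] using hleft.sub hright
  have hflux : IsBoundedUnder (· ≤ ·) (𝓝[>] 0) fun ε => ‖kruzhkovFlux (-k) (u t ε)‖ :=
    isBoundedUnder_of_eventually_le (a := C)
      (eventually_mem_nhdsWithin.mono fun ε hε => hC _ (hB t ε ht hε))
  simpa [fluxMajorant] using (((hu.boundary t ht).pow 2).mul hright).add
    (isBoundedUnder_le_mul_tendsto_zero hflux hjump)

lemma tendsto_setIntegral_fluxMajorant (hu : IsQuadrantSolution f c u) (hφ : IsTestFunction φ)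
    (k : ℝ) : Tendsto (fun ε => ∫ t in Ioi ε, fluxMajorant u φ k ε t) (𝓝[>] 0) (𝓝 0) := by
  obtain ⟨B, hB⟩ := hu.bounded
  obtain ⟨C, hC⟩ := exists_abs_le_of_continuous (A := fun y => max y 0 ^ 2) (by fun_prop) B
  obtain ⟨C', hC'⟩ := exists_abs_le_of_continuous (continuous_kruzhkovFlux (-k)) B
  obtain ⟨b, hb, hφb⟩ := hφ.flip.exists_integrable_envelope
  have hlim := tendsto_setIntegral_Ioi_of_dominated (w := fluxMajorant u φ k)
    (fun ε hε => (hu.integrableOn_fluxMajorant hφ hε k).aestronglyMeasurable)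
    ((hb.const_mul C).add ((hb.add hb).const_mul C')).integrableOn (fun ε t hε ht => ?_)
    fun t ht => hu.tendsto_fluxMajorant hφ k ht
  · simpa only [integral_zero] using hlim
  · have hu' := hB t ε ht hε
    refine (abs_add_le _ _).trans (add_le_add ?_ ?_)
    · rw [abs_mul]
      exact mul_le_mul (hC _ hu') (hφb ε t) (abs_nonneg _) ((abs_nonneg _).trans (hC _ hu'))
    · rw [abs_mul]
      exact mul_le_mul (hC' _ hu') ((abs_sub _ _).trans (add_le_add (hφb (-ε) t) (hφb ε t)))
        (abs_nonneg _) ((abs_nonneg _).trans (hC' _ hu'))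

lemma quadrant_inequality (hu : IsQuadrantSolution f c u) (hf : Continuous f)
    (hφ : IsTestFunction φ) (hφ₀ : ∀ t x, 0 ≤ φ t x) (k : ℝ) :
    0 ≤ (∫ z in Ioi 0 ×ˢ Ioi 0, kruzhkovIntegrand f u φ k z.1 z.2)
      + (∫ z in Ioi 0 ×ˢ Ioi 0, kruzhkovIntegrand f u (fun t x => φ t (-x)) (-k) z.1 z.2)
      + ((∫ x in Ioi 0, |c - k| * φ 0 x) + ∫ x in Ioi 0, |c - -k| * φ 0 (-x)) := by
  have hlim := (((tendsto_setIntegral_Ioi_prod_Ioi (hu.integrableOn_kruzhkovIntegrand hf hφ k)).add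
    (tendsto_setIntegral_Ioi_prod_Ioi (hu.integrableOn_kruzhkovIntegrand hf hφ.reflect (-k)))).add
    ((hu.tendsto_setIntegral_initial hφ k).add
      (hu.tendsto_setIntegral_initial hφ.reflect (-k)))).add
    (hu.tendsto_setIntegral_fluxMajorant hφ k)
  rw [add_zero] at hlim
  refine ge_of_tendsto hlim ?_
  filter_upwards [self_mem_nhdsWithin] with ε hε
  rw [hu.setIntegral_kruzhkovIntegrand_eq hφ hε k,
    hu.setIntegral_kruzhkovIntegrand_eq hφ.reflect hε (-k)]
  linarith [hu.setIntegral_kruzhkovFlux_add_le hφ hφ₀ hε k]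

end IsQuadrantSolution

end Limit

section Reflection

variable {f : ℝ → ℝ} {c : ℝ} {u φ : ℝ → ℝ → ℝ}

lemma integral_eq_setIntegral_Ioi_add_neg {H : ℝ → ℝ} (hright : IntegrableOn H (Ioi 0))
    (hleft : IntegrableOn (fun x => H (-x)) (Ioi 0)) :
    ∫ x, H x = (∫ x in Ioi 0, H x) + ∫ x in Ioi 0, H (-x) := by
  have hIic : IntegrableOn H (Iic 0) := by
    rw [integrableOn_Iic_iff_integrableOn_Iio,
      ← (Measure.measurePreserving_neg (volume : Measure ℝ)).integrableOn_comp_preimage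
        (Homeomorph.neg ℝ).measurableEmbedding]
    simpa [Function.comp_def] using hleft
  rw [integral_comp_neg_Ioi, neg_zero, ← intervalIntegral.integral_Iic_add_Ioi hIic hright,
    add_comm]

lemma setIntegral_integral_eq_quadrants {H : ℝ → ℝ → ℝ}
    (hright : IntegrableOn (fun z : ℝ × ℝ => H z.1 z.2) (Ioi 0 ×ˢ Ioi 0))
    (hleft : IntegrableOn (fun z : ℝ × ℝ => H z.1 (-z.2)) (Ioi 0 ×ˢ Ioi 0)) :
    ∫ t in Ioi 0, ∫ x, H t x
      = (∫ z in Ioi 0 ×ˢ Ioi 0, H z.1 z.2) + ∫ z in Ioi 0 ×ˢ Ioi 0, H z.1 (-z.2) := by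
  rw [Measure.volume_eq_prod] at hright hleft ⊢
  rw [setIntegral_prod _ hright, setIntegral_prod _ hleft]
  rw [IntegrableOn, ← Measure.prod_restrict] at hright hleft
  rw [← integral_add hright.integral_prod_left hleft.integral_prod_left]
  refine integral_congr_ae ?_
  filter_upwards [hright.prod_right_ae, hleft.prod_right_ae] with t hright_t hleft_t
  exact integral_eq_setIntegral_Ioi_add_neg hright_t hleft_t

lemma kruzhkovIntegrand_neg (hu : ∀ t, Function.Odd (u t)) (hf : Function.Odd f) (k t x : ℝ) :
    kruzhkovIntegrand f u φ k t (-x) = kruzhkovIntegrand f u (fun t x => φ t (-x)) (-k) t x := by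
  have hlevel : -u t x - k = -(u t x - -k) := by ring
  simp only [kruzhkovIntegrand]
  rw [hu, hf, deriv_comp_neg (φ t), hlevel, abs_neg, Real.sign_neg]
  ring

theorem IsQuadrantSolution.kruzhkov_inequality (hu : IsQuadrantSolution f c u)
    (hf : Continuous f) (hf_odd : Function.Odd f) (hu_odd : ∀ t, Function.Odd (u t))
    {w : ℝ → ℝ} (hw_pos : ∀ x, 0 < x → w x = c) (hw_neg : ∀ x, x < 0 → w x = -c)
    (hφ : IsTestFunction φ) (hφ₀ : ∀ t x, 0 ≤ φ t x) (k : ℝ) :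
    0 ≤ (∫ t in Ioi 0, ∫ x, kruzhkovIntegrand f u φ k t x) + ∫ x, |w x - k| * φ 0 x := by
  have hneg : (fun z : ℝ × ℝ => kruzhkovIntegrand f u φ k z.1 (-z.2))
      = fun z => kruzhkovIntegrand f u (fun t x => φ t (-x)) (-k) z.1 z.2 :=
    funext fun z => kruzhkovIntegrand_neg hu_odd hf_odd k z.1 z.2
  have hright : EqOn (fun x => |c - k| * φ 0 x) (fun x => |w x - k| * φ 0 x) (Ioi 0) :=
    fun x hx => by simp only [hw_pos x hx]
  have hleft : EqOn (fun x => |c - -k| * φ 0 (-x)) (fun x => |w (-x) - k| * φ 0 (-x)) (Ioi 0) :=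
    fun x hx => by
      simp only [hw_neg (-x) (neg_lt_zero.2 hx), ← abs_neg (-c - k), neg_sub', neg_neg]
  rw [integral_eq_setIntegral_Ioi_add_neg
    (((hφ.integrable_slice 0).const_mul _).integrableOn.congr_fun hright measurableSet_Ioi)
    (((hφ.reflect.integrable_slice 0).const_mul _).integrableOn.congr_fun hleft measurableSet_Ioi),
    ← setIntegral_congr_fun measurableSet_Ioi hright,
    ← setIntegral_congr_fun measurableSet_Ioi hleft,
    setIntegral_integral_eq_quadrants (hu.integrableOn_kruzhkovIntegrand hf hφ k)
      (hneg ▸ hu.integrableOn_kruzhkovIntegrand hf hφ.reflect (-k)), hneg]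
  exact hu.quadrant_inequality hf hφ hφ₀ k

end Reflection

section Solution

variable {F : ℝ → ℝ → ℝ → ℝ × ℝ} {Δ : ℝ → ℝ → ℝ × ℝ} {ε s t x y : ℝ}

lemma usol_odd (F : ℝ → ℝ → ℝ → ℝ × ℝ) (Δ : ℝ → ℝ → ℝ × ℝ) (t : ℝ) :
    Function.Odd (usol F Δ t) := fun x => by
  rcases lt_trichotomy x 0 with hx | rfl | hx
  · simp [usol, hx, hx.not_gt]
  · simp [usol]
  · simp [usol, hx, hx.not_gt]

lemma exists_isAdmissible (hF : IsHSFlow F) (hΔ : IsDeltaMap F Δ) (ht : 0 < t) (hx : 0 < x) :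
    ∃ q p, IsAdmissible q p t ∧ q t = x ∧ usol F Δ t x = p t := by
  obtain ⟨hmem, hreach, hpos⟩ := hΔ t x ht hx
  obtain ⟨hsol, hstart⟩ := hF (Δ t x).1 (Δ t x).2
  refine ⟨_, _, ⟨hsol.isNewtonOrbit, by rwa [hstart], fun s hs => ?_⟩, hreach, if_pos hx⟩
  rcases hs.2.eq_or_lt with rfl | hst
  · exact hx.trans_eq hreach.symm
  · exact hpos s ⟨hs.1, hst⟩

lemma usol_position_eq_momentum (hF : IsHSFlow F) (hΔ : IsDeltaMap F Δ) {q p : ℝ → ℝ}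
    (h : IsAdmissible q p t) (hs : s ∈ Ioc 0 t) : usol F Δ s (q s) = p s := by
  obtain ⟨q', p', h', hq', hp'⟩ := exists_isAdmissible hF hΔ hs.1 (h.pos s hs)
  rw [hp']
  exact h'.momentum_eq (h.mono hs.2) hs.1 hq'

lemma abs_usol_le (hF : IsHSFlow F) (hΔ : IsDeltaMap F Δ) (ht : 0 < t) (x : ℝ) :
    |usol F Δ t x| ≤ 3 := by
  have hpos {y : ℝ} (hy : 0 < y) : |usol F Δ t y| ≤ 3 := by
    obtain ⟨q, p, h, -, hp⟩ := exists_isAdmissible hF hΔ ht hy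
    exact hp ▸ h.abs_momentum_le t
  rcases lt_trichotomy x 0 with hx | rfl | hx
  · have hneg := hpos (neg_pos.2 hx)
    rwa [usol_odd, abs_neg] at hneg
  · simp [usol]
  · exact hpos hx

lemma abs_usol_sub_usol_le_space (hF : IsHSFlow F) (hΔ : IsDeltaMap F Δ) (hε : 0 < ε)
    (ht : ε ≤ t) (hx : ε ≤ x) (hy : ε ≤ y) :
    |usol F Δ t x - usol F Δ t y| ≤ (8 + 3 / ε) * |x - y| := by
  obtain ⟨q₁, p₁, h₁, rfl, hp₁⟩ := exists_isAdmissible hF hΔ (hε.trans_le ht) (hε.trans_le hx)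
  obtain ⟨q₂, p₂, h₂, rfl, hp₂⟩ := exists_isAdmissible hF hΔ (hε.trans_le ht) (hε.trans_le hy)
  rw [hp₁, hp₂]
  exact h₁.abs_momentum_sub_le h₂ hε ht hx hy

-- For close times follow the orbit through `(t, x)` back to time `s`, where it is still at distance
-- `ε / 2` from the axis; for distant times the bound on `u` suffices.
lemma abs_usol_sub_usol_le_time (hF : IsHSFlow F) (hΔ : IsDeltaMap F Δ) (hε : 0 < ε)
    (hs : ε ≤ s) (hst : s ≤ t) (hx : ε ≤ x) :
    |usol F Δ t x - usol F Δ s x| ≤ (32 + 36 / ε) * (t - s) := by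
  have hs₀ := hε.trans_le hs
  have hst₀ := sub_nonneg.2 hst
  by_cases hclose : 3 * (t - s) ≤ ε / 2
  · obtain ⟨q, p, h, rfl, hp⟩ := exists_isAdmissible hF hΔ (hs₀.trans_le hst) (hε.trans_le hx)
    have hp_time := h.abs_momentum_sub_le_time t s
    have hq_time := h.abs_position_sub_le t s
    rw [abs_of_nonneg hst₀] at hp_time hq_time
    have hspace := abs_usol_sub_usol_le_space hF hΔ (half_pos hε) (show ε / 2 ≤ s by linarith)
      (show ε / 2 ≤ q s by linarith [le_of_abs_le hq_time]) (show ε / 2 ≤ q t by linarith)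
    rw [usol_position_eq_momentum hF hΔ h ⟨hs₀, hst⟩, abs_sub_comm (q s)] at hspace
    calc |usol F Δ t (q t) - usol F Δ s (q t)|
        ≤ |p t - p s| + |p s - usol F Δ s (q t)| := hp ▸ abs_sub_le _ _ _
      _ ≤ 8 * (t - s) + (8 + 3 / (ε / 2)) * (3 * (t - s)) := by
          gcongr
          exact hspace.trans (by gcongr)
      _ = (32 + 18 / ε) * (t - s) := by field_simp; ring
      _ ≤ (32 + 36 / ε) * (t - s) := by gcongr; norm_num
  · have hfar : 6 ≤ 36 / ε * (t - s) := by
      rw [div_mul_eq_mul_div, le_div_iff₀ hε]; linarith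
    have hbound := abs_sub (usol F Δ t x) (usol F Δ s x)
    linarith [abs_usol_le hF hΔ (hs₀.trans_le hst) x, abs_usol_le hF hΔ hs₀ x]

lemma lipschitzOnWith_usol (hF : IsHSFlow F) (hΔ : IsDeltaMap F Δ) (hε : 0 < ε) :
    LipschitzOnWith (Real.toNNReal (40 + 39 / ε)) (Function.uncurry (usol F Δ))
      (Ici ε ×ˢ Ici ε) := by
  refine LipschitzOnWith.of_dist_le' fun z hz w hw => ?_
  wlog hle : w.1 ≤ z.1 generalizing z w
  · rw [dist_comm, dist_comm z]
    exact this w hw z hz (le_of_not_ge hle)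
  have htime := abs_usol_sub_usol_le_time hF hΔ hε hw.1 hle hz.2
  have hspace := abs_usol_sub_usol_le_space hF hΔ hε hw.1 hz.2 hw.2
  have hdist₁ : z.1 - w.1 ≤ dist z w := (le_abs_self _).trans (le_max_left _ _)
  have hdist₂ : |z.2 - w.2| ≤ dist z w := le_max_right _ _
  calc |usol F Δ z.1 z.2 - usol F Δ w.1 w.2|
      ≤ |usol F Δ z.1 z.2 - usol F Δ w.1 z.2| + |usol F Δ w.1 z.2 - usol F Δ w.1 w.2| :=
        abs_sub_le _ _ _
    _ ≤ (32 + 36 / ε) * dist z w + (8 + 3 / ε) * dist z w := by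
        gcongr
        · exact htime.trans (by gcongr)
        · exact hspace.trans (by gcongr)
    _ = (40 + 39 / ε) * dist z w := by ring

lemma exists_characteristic_usol (hF : IsHSFlow F) (hΔ : IsDeltaMap F Δ) (ht : 0 < t)
    (hx : 0 < x) : ∃ q : ℝ → ℝ, q t = x ∧ HasDerivAt q (usol F Δ t x) t ∧
      HasDerivWithinAt (fun s => usol F Δ s (q s)) (-g' x) (Iic t) t := by
  obtain ⟨q, p, h, rfl, hp⟩ := exists_isAdmissible hF hΔ ht hx
  refine ⟨q, rfl, hp ▸ h.isNewtonOrbit.hasDerivAt_position t, ?_⟩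
  refine (h.isNewtonOrbit.hasDerivAt_momentum t).hasDerivWithinAt.congr_of_eventuallyEq ?_ hp
  filter_upwards [Ioc_mem_nhdsLE ht] with s hs
  exact usol_position_eq_momentum hF hΔ h hs

lemma tendsto_usol_initial (hF : IsHSFlow F) (hΔ : IsDeltaMap F Δ) (hx : 0 < x) :
    Tendsto (fun t => usol F Δ t x) (𝓝[>] 0) (𝓝 2) := by
  have hzero : Tendsto (fun t : ℝ => 8 * t) (𝓝[>] 0) (𝓝 0) :=
    (Continuous.tendsto' (by fun_prop) 0 0 (by simp)).mono_left nhdsWithin_le_nhds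
  refine tendsto_sub_nhds_zero_iff.1 (squeeze_zero_norm' ?_ hzero)
  filter_upwards [Ioo_mem_nhdsGT (show (0 : ℝ) < x / 3 by positivity)] with t ht
  obtain ⟨q, p, h, rfl, hp⟩ := exists_isAdmissible hF hΔ ht.1 hx
  rw [hp]
  exact h.abs_momentum_sub_two_le ht.1 (by linarith [ht.2])

lemma tendsto_max_usol_boundary (hF : IsHSFlow F) (hΔ : IsDeltaMap F Δ) (ht : 0 < t) :
    Tendsto (fun x => max (usol F Δ t x) 0) (𝓝[>] 0) (𝓝 0) := by
  have hzero : Tendsto (fun x => x / t) (𝓝[>] 0) (𝓝 0) :=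
    (Continuous.tendsto' (by fun_prop) 0 0 (by simp)).mono_left nhdsWithin_le_nhds
  refine squeeze_zero' (Eventually.of_forall fun x => le_max_right _ _) ?_ hzero
  filter_upwards [self_mem_nhdsWithin] with x hx
  obtain ⟨q, p, h, rfl, hp⟩ := exists_isAdmissible hF hΔ ht hx
  rw [hp]
  exact max_le (h.momentum_le_div ht) (div_nonneg (le_of_lt hx) ht.le)

lemma isQuadrantSolution_usol (hF : IsHSFlow F) (hΔ : IsDeltaMap F Δ) :
    IsQuadrantSolution g' 2 (usol F Δ) where
  bounded := ⟨3, fun _ x ht _ => abs_usol_le hF hΔ ht x⟩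
  lipschitz _ hε := ⟨_, lipschitzOnWith_usol hF hΔ hε⟩
  characteristic _ _ ht hx := exists_characteristic_usol hF hΔ ht hx
  initial _ hx := tendsto_usol_initial hF hΔ hx
  boundary _ ht := tendsto_max_usol_boundary hF hΔ ht

end Solution

/-- The function `u` built from `F` and `Δ` is a bounded Kruzhkov entropy solution of
`∂ₜ u + ∂ₓ(u²/2 + g(x)) = 0` with initial datum `u₀`. -/
theorem stmt_14 (F : ℝ → ℝ → ℝ → ℝ × ℝ) (hF : IsHSFlow F)
    (Δ : ℝ → ℝ → ℝ × ℝ) (hΔ : IsDeltaMap F Δ) :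
    (∃ M : ℝ, ∀ t ∈ Ioi (0:ℝ), ∀ x : ℝ, |usol F Δ t x| ≤ M) ∧
    ∀ φ : ℝ → ℝ → ℝ,
      ContDiff ℝ (⊤ : ℕ∞) (fun z : ℝ × ℝ => φ z.1 z.2) →
      HasCompactSupport (fun z : ℝ × ℝ => φ z.1 z.2) →
      (∀ t x : ℝ, 0 ≤ φ t x) →
      ∀ k : ℝ,
        0 ≤ (∫ t in Ioi (0:ℝ), ∫ x : ℝ,
              (|usol F Δ t x - k| * deriv (fun s => φ s x) t
                + Real.sign (usol F Δ t x - k)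
                    * ((usol F Δ t x) ^ 2 / 2 - k ^ 2 / 2) * deriv (fun y => φ t y) x
                - Real.sign (usol F Δ t x - k) * g' x * φ t x))
            + ∫ x : ℝ, |u₀ x - k| * φ 0 x := by
  refine ⟨⟨3, fun t ht x => abs_usol_le hF hΔ ht x⟩, fun φ hsmooth hsupport hφ₀ k => ?_⟩
  have hφ : IsTestFunction φ := ⟨hsmooth.of_le (by exact_mod_cast le_top), hsupport⟩
  exact (isQuadrantSolution_usol hF hΔ).kruzhkov_inequality continuous_g' g'_odd (usol_odd F Δ)
    (w := u₀) (fun x hx => if_neg hx.not_gt) (fun x hx => if_pos hx) hφ hφ₀ k
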